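/- arXiv:1808.04817 — 2 statements merged into one kernel-verified Lean document; each statement's English description precedes it below -/
import Mathlib

section
/- Let f : 𝕋 → 𝕋 be a sense-preserving circle homeomorphism. Then the Fourier support {n ∈ ℤ : f̂(n) ≠ 0} is bounded from above if and only if there exist an integer n ≥ 1 and a finite Blaschke product B of degree n − 1 such that f(ζ) = ζⁿ/B(ζ) for all ζ ∈ 𝕋. -/
/-!
Suppose first that the Fourier support of `f` is bounded above by a natural number `N`. Then
`h ζ = ζ ^ N * conj (f ζ)` is continuous and unimodular on the circle, and its Fourier coefficients
of negative index vanish, being conjugates of coefficients of `f` of index above `N`.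

* `exists_diskAlgebra_extension`: such an `h` is the boundary value of a function `H` continuous on
  the closed disk and holomorphic inside. `H` is the Poisson integral of `h`. It attains the
  boundary values continuously because Poisson integration is a contraction and trigonometric
  polynomials are dense; it is holomorphic because the antiholomorphic half of the Poisson kernel
  only sees the vanishing coefficients.
* `exists_blaschke`: a function of the disk algebra that is unimodular on the circle is a finite
  Blaschke product. Its zeros are divided out one at a time. They lie in a compact subset of the
  open disk, so each division increases the modulus at a fixed nonzero point by at least a fixed
  factor, while the maximum principle bounds that modulus by one; hence the process stops. A
  zero-free function of this kind is constant by the maximum principle for `H` and `1 / H`.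
* `winding_eq`: `h` has winding number `N - 1` and a Blaschke product of degree `d` has winding
  number `d`, so `N = d + 1`. Unimodularity turns `ζ ^ N * conj (f ζ) = B ζ` into
  `f ζ = ζ ^ N / B ζ`.

Conversely, if `f ζ = ζ ^ n / B ζ = ζ ^ n * conj (B ζ)` on the circle, the coefficient of index
`n + j` with `j ≥ 1` is the conjugate of the mean of `ζ ^ j * B ζ`, which is its value at the
origin, namely zero (`fCoeff_eq_zero_of_blaschke`).
-/

open Complex MeasureTheory intervalIntegral ComplexConjugate

noncomputable def fCoeff (f : ℂ → ℂ) (n : ℤ) : ℂ :=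
  (1 / (2 * Real.pi) : ℂ) * ∫ θ in (0:ℝ)..(2 * Real.pi),
    f (Complex.exp (θ * Complex.I)) * Complex.exp (-(n : ℂ) * θ * Complex.I)

/-- A sense-preserving homeomorphism of the unit circle, described via a continuous
strictly increasing degree-one lift. -/
def CirclePosHomeo (f : ℂ → ℂ) : Prop :=
  ∃ F : ℝ → ℝ, Continuous F ∧ StrictMono F ∧
    (∀ θ, F (θ + 2 * Real.pi) = F θ + 2 * Real.pi) ∧
    ∀ θ : ℝ, f (Complex.exp (θ * Complex.I)) = Complex.exp (F θ * Complex.I)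

/-! ### The Dirichlet problem on the unit disk -/

/-- The Poisson integral over the unit circle of the boundary values of `u`. -/
noncomputable def poissonInt (u : ℂ → ℂ) (w : ℂ) : ℂ :=
  Real.circleAverage (poissonKernel 0 w • u) 0 1

lemma poissonKernel_nonneg {w z : ℂ} (hw : ‖w‖ < 1) (hz : ‖z‖ = 1) :
    0 ≤ poissonKernel 0 w z := by
  rw [poissonKernel_def]
  simp only [sub_zero, hz]
  apply div_nonneg _ (by positivity)
  nlinarith [norm_nonneg w]

lemma continuousOn_poissonKernel {w : ℂ} (hw : ‖w‖ < 1) :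
    ContinuousOn (poissonKernel 0 w) (Metric.sphere 0 1) := by
  have : poissonKernel 0 w =
      fun z => (‖z - 0‖ ^ 2 - ‖w - 0‖ ^ 2) / ‖(z - 0) - (w - 0)‖ ^ 2 := by
    ext z; rw [poissonKernel_def]
  rw [this]
  apply ContinuousOn.div (by fun_prop) (by fun_prop)
  intro z hz h
  have hzw : z = w := by simpa [sub_eq_zero] using h
  simp only [mem_sphere_iff_norm, sub_zero] at hz
  rw [hzw] at hz
  exact hw.ne hz

lemma circleIntegrable_poissonKernel_smul {w : ℂ} (hw : ‖w‖ < 1) {u : ℂ → ℂ}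
    (hu : ContinuousOn u (Metric.sphere 0 1)) :
    CircleIntegrable (poissonKernel 0 w • u) 0 1 :=
  ContinuousOn.circleIntegrable zero_le_one ((continuousOn_poissonKernel hw).smul hu)

lemma norm_circleAverage_le (u : ℂ → ℂ) :
    ‖Real.circleAverage u 0 1‖ ≤ Real.circleAverage (fun z => ‖u z‖) 0 1 := by
  rw [Real.circleAverage_def, Real.circleAverage_def, norm_smul, smul_eq_mul,
    Real.norm_of_nonneg (by positivity)]
  gcongr
  exact intervalIntegral.norm_integral_le_integral_norm (by positivity)

lemma circleAverage_poissonKernel {w : ℂ} (hw : ‖w‖ < 1) :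
    Real.circleAverage (poissonKernel 0 w) 0 1 = 1 := by
  have h1 : InnerProductSpace.HarmonicOnNhd (fun _ : ℂ => (1 : ℝ)) (Metric.closedBall 0 1) :=
    fun x _ => InnerProductSpace.harmonicAt_const (x := x) (1 : ℝ)
  have h := InnerProductSpace.HarmonicOnNhd.circleAverage_poissonKernel_smul h1
    (w := w) (by simpa using hw)
  rw [← h]
  congr 1
  ext z
  simp

/-- The Poisson kernel is positive with mean one, so the Poisson integral is a contraction for
the supremum norm. -/
lemma norm_poissonInt_sub_le {w : ℂ} (hw : ‖w‖ < 1) {u v : ℂ → ℂ} {ε : ℝ}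
    (hu : ContinuousOn u (Metric.sphere 0 1)) (hv : ContinuousOn v (Metric.sphere 0 1))
    (h : ∀ z : ℂ, ‖z‖ = 1 → ‖u z - v z‖ ≤ ε) :
    ‖poissonInt u w - poissonInt v w‖ ≤ ε := by
  unfold poissonInt
  rw [← Real.circleAverage_sub (circleIntegrable_poissonKernel_smul hw hu)
    (circleIntegrable_poissonKernel_smul hw hv)]
  refine (norm_circleAverage_le _).trans ?_
  have hc := continuousOn_poissonKernel hw
  calc _ ≤ Real.circleAverage (fun z => ε • poissonKernel 0 w z) 0 1 := by
        apply Real.circleAverage_mono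
        · apply ContinuousOn.circleIntegrable zero_le_one
          exact ((hc.smul hu).sub (hc.smul hv)).norm
        · apply ContinuousOn.circleIntegrable zero_le_one
          exact hc.const_smul ε
        · intro z hz
          have hz1 : ‖z‖ = 1 := by simpa using hz
          have h0 := poissonKernel_nonneg hw hz1
          simp only [Pi.sub_apply, Pi.smul_apply', ← smul_sub, norm_smul,
            Real.norm_of_nonneg h0, smul_eq_mul]
          rw [mul_comm]
          exact mul_le_mul_of_nonneg_right (h z hz1) h0
    _ = ε := by
        rw [Real.circleAverage_fun_smul, circleAverage_poissonKernel hw, smul_eq_mul, mul_one]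

/-- `u` is continuous on the closed unit disk and equal to the Poisson integral of its boundary
values in the open disk. -/
def PoissonRep (u : ℂ → ℂ) : Prop :=
  ContinuousOn u (Metric.closedBall 0 1) ∧ ∀ w : ℂ, ‖w‖ < 1 → poissonInt u w = u w

lemma PoissonRep.add {u v : ℂ → ℂ} (hu : PoissonRep u) (hv : PoissonRep v) :
    PoissonRep (u + v) := by
  refine ⟨hu.1.add hv.1, fun w hw => ?_⟩
  rw [Pi.add_apply, ← hu.2 w hw, ← hv.2 w hw]
  unfold poissonInt
  rw [smul_add, Real.circleAverage_add]
  · exact circleIntegrable_poissonKernel_smul hw (hu.1.mono Metric.sphere_subset_closedBall)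
  · exact circleIntegrable_poissonKernel_smul hw (hv.1.mono Metric.sphere_subset_closedBall)

lemma PoissonRep.smul {u : ℂ → ℂ} (hu : PoissonRep u) (c : ℂ) : PoissonRep (c • u) := by
  refine ⟨hu.1.const_smul c, fun w hw => ?_⟩
  rw [Pi.smul_apply, ← hu.2 w hw]
  unfold poissonInt
  rw [← Real.circleAverage_smul, smul_comm]

lemma PoissonRep.conj {u : ℂ → ℂ} (hu : PoissonRep u) : PoissonRep (fun z => conj (u z)) := by
  refine ⟨Complex.continuous_conj.comp_continuousOn hu.1, fun w hw => ?_⟩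
  have h := ContinuousLinearMap.circleAverage_comp_comm (Complex.conjCLE : ℂ →L[ℝ] ℂ)
    (circleIntegrable_poissonKernel_smul hw (hu.1.mono Metric.sphere_subset_closedBall))
  change _ = conj (u w)
  rw [← hu.2 w hw]
  unfold poissonInt
  rw [show conj (Real.circleAverage (poissonKernel 0 w • u) 0 1)
    = (Complex.conjCLE : ℂ →L[ℝ] ℂ) (Real.circleAverage (poissonKernel 0 w • u) 0 1) by simp, ← h]
  congr 1
  ext z
  simp

lemma poissonRep_pow (n : ℕ) : PoissonRep (fun z => z ^ n) := by
  refine ⟨by fun_prop, fun w hw => ?_⟩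
  have hd : DiffContOnCl ℂ (fun z : ℂ => z ^ n) (Metric.ball 0 1) :=
    Differentiable.diffContOnCl (by fun_prop)
  exact hd.circleAverage_poissonKernel_smul (by simpa using hw)

instance : Fact (0 < 2 * Real.pi) := ⟨Real.two_pi_pos⟩

lemma exists_poissonRep_fourier (n : ℤ) :
    ∃ u, PoissonRep u ∧ ∀ x : AddCircle (2 * Real.pi), fourier n x = u (AddCircle.toCircle x) := by
  obtain ⟨k, rfl | rfl⟩ := n.eq_nat_or_neg
  · exact ⟨_, poissonRep_pow k, fun x => by simp [fourier_apply, AddCircle.toCircle_nsmul]⟩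
  · refine ⟨_, (poissonRep_pow k).conj, fun x => ?_⟩
    rw [fourier_neg]
    simp [fourier_apply, AddCircle.toCircle_nsmul]

lemma exists_poissonRep_of_mem_span {p : C(AddCircle (2 * Real.pi), ℂ)}
    (hp : p ∈ Submodule.span ℂ (Set.range (fourier (T := 2 * Real.pi)))) :
    ∃ u, PoissonRep u ∧ ∀ x : AddCircle (2 * Real.pi), p x = u (AddCircle.toCircle x) := by
  induction hp using Submodule.span_induction with
  | mem p hp =>
    obtain ⟨n, rfl⟩ := hp
    exact exists_poissonRep_fourier n
  | zero => exact ⟨_, (poissonRep_pow 0).smul 0, fun x => by simp⟩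
  | add p q _ _ hp hq =>
    obtain ⟨u, hu, hu'⟩ := hp
    obtain ⟨v, hv, hv'⟩ := hq
    exact ⟨_, hu.add hv, fun x => by simp [hu', hv']⟩
  | smul c p _ hp =>
    obtain ⟨u, hu, hu'⟩ := hp
    exact ⟨_, hu.smul c, fun x => by simp [hu']⟩

/-- Density of trigonometric polynomials: boundary data can be approximated uniformly by functions
for which the Dirichlet problem is already solved. -/
lemma exists_poissonRep_approx {h : ℂ → ℂ} (hh : ContinuousOn h (Metric.sphere 0 1))
    {ε : ℝ} (hε : 0 < ε) :
    ∃ u, PoissonRep u ∧ ∀ z : ℂ, ‖z‖ = 1 → ‖h z - u z‖ < ε := by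
  have hcont : Continuous fun x : AddCircle (2 * Real.pi) => h (AddCircle.toCircle x) := by
    apply hh.comp_continuous (continuous_subtype_val.comp AddCircle.continuous_toCircle)
    intro x
    exact (AddCircle.toCircle x).2
  let g : C(AddCircle (2 * Real.pi), ℂ) := ⟨_, hcont⟩
  have hg : g ∈ (Submodule.span ℂ (Set.range (fourier (T := 2 * Real.pi)))).topologicalClosure := by
    rw [span_fourier_closure_eq_top]; trivial
  obtain ⟨p, hp, hgp⟩ := Metric.mem_closure_iff.1 hg ε hε
  obtain ⟨u, hu, hpu⟩ := exists_poissonRep_of_mem_span hp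
  refine ⟨u, hu, fun z hz => ?_⟩
  have hx : (AddCircle.toCircle ((Complex.arg z : ℝ) : AddCircle (2 * Real.pi)) : ℂ) = z := by
    rw [AddCircle.toCircle_apply_mk, div_self Real.two_pi_pos.ne', one_mul, Circle.coe_exp]
    simpa [hz] using Complex.norm_mul_exp_arg_mul_I z
  have h1 := (ContinuousMap.dist_lt_iff hε).1 hgp ((Complex.arg z : ℝ) : AddCircle (2 * Real.pi))
  rw [hpu, hx, dist_eq_norm] at h1
  simpa [g, hx] using h1

open Classical in
/-- Solution of the Dirichlet problem on the unit disk. -/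
lemma continuousOn_dirichlet {h : ℂ → ℂ} (hh : ContinuousOn h (Metric.sphere 0 1)) :
    ContinuousOn (fun w : ℂ => if ‖w‖ < 1 then poissonInt h w else h w)
      (Metric.closedBall 0 1) := by
  apply continuousOn_of_uniform_approx_of_continuousOn
  intro U hU
  obtain ⟨ε, hε, hεU⟩ := Metric.mem_uniformity_dist.1 hU
  obtain ⟨u, hu, hhu⟩ := exists_poissonRep_approx hh (half_pos hε)
  refine ⟨u, hu.1, fun w hw => hεU ?_⟩
  rw [dist_eq_norm]
  refine lt_of_le_of_lt ?_ (half_lt_self hε)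
  split_ifs with h1
  · rw [← hu.2 w h1]
    exact norm_poissonInt_sub_le h1 hh (hu.1.mono Metric.sphere_subset_closedBall)
      fun z hz => (hhu z hz).le
  · have : ‖w‖ = 1 := le_antisymm (by simpa using hw) (not_lt.1 h1)
    exact (hhu w this).le

/-! ### Boundary values of the disk algebra -/

/-- On the unit circle, `2 * poissonKernel 0 w` is the sum of the Herglotz kernel, holomorphic in
`w`, and its conjugate, rewritten with `conj z = 1 / z`. -/
lemma poissonKernel_eq_herglotz_add {w z : ℂ} (hw : ‖w‖ < 1) (hz : ‖z‖ = 1) :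
    ((poissonKernel 0 w z : ℝ) : ℂ) =
      (1 / 2) * (herglotzRieszKernel 0 w z + 1 + 2 * (conj w * z * (1 - conj w * z)⁻¹)) := by
  have hz0 : z ≠ 0 := by rintro rfl; simp at hz
  have hzc : conj z = z⁻¹ := by rw [Complex.inv_def, Complex.normSq_eq_norm_sq, hz]; simp
  have hzw : z - w ≠ 0 := by
    intro h; rw [sub_eq_zero.1 h] at hz; exact hw.ne hz
  have h1 : 1 - conj w * z ≠ 0 := by
    intro h
    have : ‖conj w * z‖ = 1 := by rw [← sub_eq_zero.1 h]; simp
    rw [norm_mul, hz, RCLike.norm_conj, mul_one] at this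
    exact hw.ne this
  rw [poissonKernel_eq_re_herglotzRieszKernel, Function.comp_apply, Complex.re_eq_add_conj,
    herglotzRieszKernel_def]
  simp only [sub_zero, map_div₀, map_add, map_sub, hzc]
  have h2 : z⁻¹ - conj w ≠ 0 := by
    rw [← hzc, ← map_sub]; exact (map_ne_zero _).2 hzw
  have h3 : (z⁻¹ + conj w) / (z⁻¹ - conj w) = 1 + 2 * (conj w * z * (1 - conj w * z)⁻¹) := by
    rw [div_eq_iff h2]
    linear_combination (-2 * conj w * (1 - conj w * z)⁻¹) * mul_inv_cancel₀ hz0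
      - 2 * conj w * mul_inv_cancel₀ h1
  rw [h3]
  ring

/-- Expanding `conj w * z / (1 - conj w * z)` as a geometric series in `z`, only the vanishing
moments of `h` enter. -/
lemma circleAverage_antiholomorphic_part {h : ℂ → ℂ} (hh : ContinuousOn h (Metric.sphere 0 1))
    (h0 : ∀ k : ℕ, Real.circleAverage (fun z => z ^ (k + 1) * h z) 0 1 = 0)
    {w : ℂ} (hw : ‖w‖ < 1) :
    Real.circleAverage (fun z => conj w * z * (1 - conj w * z)⁻¹ * h z) 0 1 = 0 := by
  have hcirc (θ : ℝ) : ‖circleMap 0 1 θ‖ = 1 := by simp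
  have hcont : Continuous fun θ : ℝ => h (circleMap 0 1 θ) :=
    hh.comp_continuous (continuous_circleMap 0 1) (by simp)
  obtain ⟨C, hC⟩ := (isCompact_sphere (0 : ℂ) 1).exists_bound_of_continuousOn hh
  have hS := intervalIntegral.hasSum_integral_of_dominated_convergence
    (F := fun (k : ℕ) (θ : ℝ) => conj w ^ (k + 1) *
      ((circleMap 0 1 θ) ^ (k + 1) * h (circleMap 0 1 θ)))
    (f := fun θ => conj w * circleMap 0 1 θ * (1 - conj w * circleMap 0 1 θ)⁻¹ *
      h (circleMap 0 1 θ))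
    (μ := volume) (a := 0) (b := 2 * Real.pi)
    (fun k _ => ‖w‖ ^ (k + 1) * C)
    (fun k => by
      apply Continuous.aestronglyMeasurable
      exact continuous_const.mul (((continuous_circleMap 0 1).pow _).mul hcont))
    (fun k => Filter.Eventually.of_forall fun θ _ => by
      rw [norm_mul, norm_mul, norm_pow, norm_pow, hcirc, RCLike.norm_conj, one_pow, one_mul]
      gcongr
      exact hC _ (by simp))
    (Filter.Eventually.of_forall fun θ _ => by
      refine Summable.mul_right _ ?_
      exact (summable_nat_add_iff 1).2 (summable_geometric_of_lt_one (norm_nonneg _) hw))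
    (by simp)
    (Filter.Eventually.of_forall fun θ _ => by
      have hlt : ‖conj w * circleMap 0 1 θ‖ < 1 := by
        rw [norm_mul, hcirc, RCLike.norm_conj, mul_one]; exact hw
      have := ((hasSum_geometric_of_norm_lt_one hlt).mul_left
        (conj w * circleMap 0 1 θ)).mul_right (h (circleMap 0 1 θ))
      refine this.congr_fun ?_
      intro k
      ring)
  have hz (k : ℕ) : ∫ θ in (0:ℝ)..(2 * Real.pi), conj w ^ (k + 1) *
      ((circleMap 0 1 θ) ^ (k + 1) * h (circleMap 0 1 θ)) = 0 := by
    have := h0 k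
    rw [Real.circleAverage_def, smul_eq_zero] at this
    rw [intervalIntegral.integral_const_mul, this.resolve_left (by positivity), mul_zero]
  simp only [hz] at hS
  rw [Real.circleAverage_def, hS.unique hasSum_zero, smul_zero]

/-- A continuous function on the circle whose negative Fourier coefficients vanish is the boundary
value of a function in the disk algebra. -/
lemma exists_diskAlgebra_extension {h : ℂ → ℂ} (hh : ContinuousOn h (Metric.sphere 0 1))
    (h0 : ∀ k : ℕ, Real.circleAverage (fun z => z ^ (k + 1) * h z) 0 1 = 0) :
    ∃ H : ℂ → ℂ, DiffContOnCl ℂ H (Metric.ball 0 1) ∧ ∀ z : ℂ, ‖z‖ = 1 → H z = h z := by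
  classical
  refine ⟨fun w => if ‖w‖ < 1 then poissonInt h w else h w, ⟨?_, ?_⟩, fun z hz => by simp [hz]⟩
  · have hint : CircleIntegrable h 0 1 := hh.circleIntegrable zero_le_one
    have hd := differentiableOn_circleAverage_herglotzRieszKernel_smul hint
    refine ((hd.add_const (Real.circleAverage h 0 1)).const_mul (1 / 2)).congr ?_
    intro w hw
    have hw1 : ‖w‖ < 1 := by simpa using hw
    simp only [hw1, if_true]
    have e : ∀ z ∈ Metric.sphere (0 : ℂ) 1, z - w ≠ 0 := by
      intro z hz h
      rw [sub_eq_zero.1 h] at hz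
      exact hw1.ne (by simpa using hz)
    have e' : ∀ z ∈ Metric.sphere (0 : ℂ) 1, 1 - conj w * z ≠ 0 := by
      intro z hz h
      have : ‖conj w * z‖ = 1 := by rw [← sub_eq_zero.1 h]; simp
      rw [norm_mul, RCLike.norm_conj, mem_sphere_zero_iff_norm.1 hz, mul_one] at this
      exact hw1.ne this
    have i1 : CircleIntegrable (fun z => herglotzRieszKernel 0 w z • h z) 0 1 := by
      apply ContinuousOn.circleIntegrable zero_le_one
      rw [herglotzRieszKernel_fun_def]
      refine ContinuousOn.smul (f := fun z : ℂ => ((z - 0) + (w - 0)) / ((z - 0) - (w - 0)))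
        (ContinuousOn.div (by fun_prop) (by fun_prop) ?_) hh
      simpa using e
    have i2 : CircleIntegrable (fun z => conj w * z * (1 - conj w * z)⁻¹ * h z) 0 1 := by
      apply ContinuousOn.circleIntegrable zero_le_one
      refine ContinuousOn.mul (ContinuousOn.mul (by fun_prop) ?_) hh
      exact ContinuousOn.inv₀ (by fun_prop) e'
    have key : poissonInt h w = Real.circleAverage
        ((1 / 2 : ℂ) • (((fun z => herglotzRieszKernel 0 w z • h z) + h) +
          (2 : ℂ) • (fun z => conj w * z * (1 - conj w * z)⁻¹ * h z))) 0 1 := by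
      apply Real.circleAverage_congr_sphere
      intro z hz
      simp only [abs_one, mem_sphere_zero_iff_norm] at hz
      simp only [Pi.smul_apply', Pi.smul_apply, Pi.add_apply, Complex.real_smul,
        poissonKernel_eq_herglotz_add hw1 hz, smul_eq_mul]
      ring
    rw [key, Real.circleAverage_smul, Real.circleAverage_add (i1.add hint) (i2.const_smul),
      Real.circleAverage_add i1 hint, Real.circleAverage_smul,
      circleAverage_antiholomorphic_part hh h0 hw1, smul_zero, add_zero, smul_eq_mul]
  · rw [closure_ball _ one_ne_zero]
    exact continuousOn_dirichlet hh

/-! ### Unimodular functions in the disk algebra -/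

lemma one_sub_conj_mul_ne_zero {a z : ℂ} (ha : ‖a‖ < 1) (hz : ‖z‖ ≤ 1) : 1 - conj a * z ≠ 0 := by
  intro h
  have h1 : ‖conj a * z‖ = 1 := by rw [← sub_eq_zero.1 h]; simp
  rw [norm_mul, RCLike.norm_conj] at h1
  nlinarith [norm_nonneg a, norm_nonneg z]

lemma normSq_blaschke (a z : ℂ) :
    ‖1 - conj a * z‖ ^ 2 - ‖z - a‖ ^ 2 = (1 - ‖a‖ ^ 2) * (1 - ‖z‖ ^ 2) := by
  simp only [← Complex.normSq_eq_norm_sq, Complex.normSq_apply]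
  simp
  ring

lemma norm_blaschke_eq {a z : ℂ} (hz : ‖z‖ = 1) : ‖z - a‖ = ‖1 - conj a * z‖ := by
  have h := normSq_blaschke a z
  rw [hz] at h
  have : ‖z - a‖ ^ 2 = ‖1 - conj a * z‖ ^ 2 := by linarith
  exact (pow_left_inj₀ (norm_nonneg _) (norm_nonneg _) two_ne_zero).1 this

lemma norm_le_one_of_unimodular {H : ℂ → ℂ} (hH : DiffContOnCl ℂ H (Metric.ball 0 1))
    (h1 : ∀ z : ℂ, ‖z‖ = 1 → ‖H z‖ = 1) {z : ℂ} (hz : ‖z‖ ≤ 1) : ‖H z‖ ≤ 1 := by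
  apply Complex.norm_le_of_forall_mem_frontier_norm_le Metric.isBounded_ball hH
  · intro w hw
    rw [frontier_ball _ one_ne_zero] at hw
    exact (h1 w (by simpa using hw)).le
  · rw [closure_ball _ one_ne_zero]; simpa using hz

/-- The maximum principle applied to `H` and `1 / H`. -/
lemma eq_const_of_unimodular_of_ne_zero {H : ℂ → ℂ} (hH : DiffContOnCl ℂ H (Metric.ball 0 1))
    (h1 : ∀ z : ℂ, ‖z‖ = 1 → ‖H z‖ = 1) (h0 : ∀ z : ℂ, ‖z‖ < 1 → H z ≠ 0) :
    ‖H 0‖ = 1 ∧ ∀ z : ℂ, ‖z‖ = 1 → H z = H 0 := by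
  have hne : ∀ z ∈ closure (Metric.ball (0 : ℂ) 1), H z ≠ 0 := by
    intro z hz
    rw [closure_ball _ one_ne_zero, mem_closedBall_zero_iff] at hz
    rcases hz.lt_or_eq with hz | hz
    · exact h0 z hz
    · intro h; simpa [h] using h1 z hz
  have hle : ‖H 0‖ ≤ 1 := norm_le_one_of_unimodular hH h1 (by simp)
  have hge : ‖(H⁻¹) 0‖ ≤ 1 :=
    norm_le_one_of_unimodular (hH.inv hne) (fun z hz => by simp [h1 z hz]) (by simp)
  have hpos : 0 < ‖H 0‖ := norm_pos_iff.2 (h0 0 (by simp))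
  have hone : ‖H 0‖ = 1 := by
    apply le_antisymm hle
    rw [Pi.inv_apply, norm_inv] at hge
    exact (inv_le_one₀ hpos).1 hge
  refine ⟨hone, fun z hz => ?_⟩
  refine Complex.eqOn_closedBall_of_isMaxOn_norm hH ?_ (by simp [hz])
  intro w hw
  change ‖H w‖ ≤ ‖H 0‖
  rw [hone]
  exact norm_le_one_of_unimodular hH h1 (mem_ball_zero_iff.1 hw).le

/-- Division of `H` by the Blaschke factor of a zero `a`. -/
lemma exists_div_blaschke {H : ℂ → ℂ} (hH : DiffContOnCl ℂ H (Metric.ball 0 1))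
    (h1 : ∀ z : ℂ, ‖z‖ = 1 → ‖H z‖ = 1) {a : ℂ} (ha : ‖a‖ < 1) (ha0 : H a = 0) :
    ∃ G : ℂ → ℂ, DiffContOnCl ℂ G (Metric.ball 0 1) ∧ (∀ z : ℂ, ‖z‖ = 1 → ‖G z‖ = 1) ∧
      ∀ z, (1 - conj a * z) * H z = (z - a) * G z := by
  have hab : a ∈ Metric.ball (0 : ℂ) 1 := by simpa using ha
  have hn : Metric.ball (0 : ℂ) 1 ∈ nhds a := Metric.isOpen_ball.mem_nhds hab
  have hd : DiffContOnCl ℂ (dslope H a) (Metric.ball 0 1) := by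
    refine ⟨(Complex.differentiableOn_dslope hn).2 hH.1, ?_⟩
    rw [continuousOn_dslope (Filter.mem_of_superset hn subset_closure)]
    exact ⟨hH.2, hH.1.differentiableAt hn⟩
  have hmul : ∀ z, H z = (z - a) * dslope H a z := by
    intro z
    have := sub_smul_dslope H a z
    rw [ha0, sub_zero, smul_eq_mul] at this
    exact this.symm
  refine ⟨fun z => (1 - conj a * z) * dslope H a z, ?_, ?_, ?_⟩
  · have : DiffContOnCl ℂ (fun z : ℂ => 1 - conj a * z) (Metric.ball 0 1) :=
      Differentiable.diffContOnCl (by fun_prop)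
    simpa using this.smul hd
  · intro z hz
    rw [norm_mul, ← norm_blaschke_eq hz, ← norm_mul, ← hmul, h1 z hz]
  · intro z
    rw [hmul z]; ring

/-- If the zeros of `H` stay in `‖z‖ ≤ ρ`, each division by a Blaschke factor increases `‖H z₀‖ ^ 2`
by a fixed factor `1 / q > 1`, and `‖H z₀‖ ≤ 1` throughout; so fewer than `K` divisions remove
all zeros. -/
lemma exists_blaschke_aux {ρ q : ℝ} {z₀ : ℂ} (hz₀ : ‖z₀‖ < 1) (hq0 : 0 < q)
    (hq : ∀ a : ℂ, ‖a‖ ≤ ρ → ‖z₀ - a‖ ^ 2 ≤ q * ‖1 - conj a * z₀‖ ^ 2) (K : ℕ) :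
    ∀ H : ℂ → ℂ, DiffContOnCl ℂ H (Metric.ball 0 1) → (∀ z : ℂ, ‖z‖ = 1 → ‖H z‖ = 1) →
      (∀ z : ℂ, ‖z‖ < 1 → H z = 0 → ‖z‖ ≤ ρ) → q ^ K < ‖H z₀‖ ^ 2 →
      ∃ (d : ℕ) (σ : ℂ) (z : Fin d → ℂ), ‖σ‖ = 1 ∧ (∀ k, ‖z k‖ < 1) ∧
        ∀ ζ : ℂ, ‖ζ‖ = 1 → H ζ = σ * ∏ k, (ζ - z k) / (1 - conj (z k) * ζ) := by
  induction K with
  | zero =>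
    intro H hH h1 _ hlt
    have := norm_le_one_of_unimodular hH h1 hz₀.le
    rw [pow_zero] at hlt
    nlinarith [norm_nonneg (H z₀)]
  | succ K ih =>
    intro H hH h1 hzero hlt
    by_cases h0 : ∀ z : ℂ, ‖z‖ < 1 → H z ≠ 0
    · obtain ⟨hσ, hc⟩ := eq_const_of_unimodular_of_ne_zero hH h1 h0
      exact ⟨0, H 0, Fin.elim0, hσ, fun k => k.elim0, fun ζ hζ => by simp [hc ζ hζ]⟩
    · push Not at h0
      obtain ⟨a, ha, ha0⟩ := h0
      obtain ⟨G, hG, hG1, hHG⟩ := exists_div_blaschke hH h1 ha ha0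
      have haρ := hzero a ha ha0
      obtain ⟨d, σ, z, hσ, hz, hprod⟩ := ih G hG hG1 (by
        intro z hz hGz
        by_cases hza : z = a
        · rwa [hza]
        · refine hzero z hz ?_
          have := hHG z
          rw [hGz, mul_zero] at this
          exact (mul_eq_zero.1 this).resolve_left (one_sub_conj_mul_ne_zero ha hz.le)) (by
        have e := congrArg (fun x : ℂ => ‖x‖ ^ 2) (hHG z₀)
        simp only [norm_mul, mul_pow] at e
        have hpos : 0 < ‖1 - conj a * z₀‖ ^ 2 :=
          pow_pos (norm_pos_iff.2 (one_sub_conj_mul_ne_zero ha hz₀.le)) 2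
        have h2 : ‖1 - conj a * z₀‖ ^ 2 * ‖H z₀‖ ^ 2 ≤
            ‖1 - conj a * z₀‖ ^ 2 * (q * ‖G z₀‖ ^ 2) := by
          rw [e]
          calc _ ≤ q * ‖1 - conj a * z₀‖ ^ 2 * ‖G z₀‖ ^ 2 := by
                gcongr
                exact hq a haρ
            _ = _ := by ring
        have h3 := lt_of_lt_of_le hlt (le_of_mul_le_mul_left h2 hpos)
        rw [pow_succ'] at h3
        exact lt_of_mul_lt_mul_left h3 hq0.le)
      refine ⟨d + 1, σ, Fin.cons a z, hσ, ?_, ?_⟩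
      · intro k
        refine Fin.cases ?_ (fun i => ?_) k
        · simpa using ha
        · simpa using hz i
      · intro ζ hζ
        rw [Fin.prod_univ_succ]
        simp only [Fin.cons_zero, Fin.cons_succ]
        have hne := one_sub_conj_mul_ne_zero ha hζ.le
        have := hHG ζ
        rw [hprod ζ hζ] at this
        have hHζ : H ζ = (ζ - a) / (1 - conj a * ζ) *
            (σ * ∏ k, (ζ - z k) / (1 - conj (z k) * ζ)) := by
          rw [div_mul_eq_mul_div, eq_div_iff hne, ← this, mul_comm]
        rw [hHζ, mul_left_comm]

/-- A function in the disk algebra that is unimodular on the circle is a finite Blaschke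
product. -/
lemma exists_blaschke {H : ℂ → ℂ} (hH : DiffContOnCl ℂ H (Metric.ball 0 1))
    (h1 : ∀ z : ℂ, ‖z‖ = 1 → ‖H z‖ = 1) :
    ∃ (d : ℕ) (σ : ℂ) (z : Fin d → ℂ), ‖σ‖ = 1 ∧ (∀ k, ‖z k‖ < 1) ∧
        ∀ ζ : ℂ, ‖ζ‖ = 1 → H ζ = σ * ∏ k, (ζ - z k) / (1 - conj (z k) * ζ) := by
  have hcont : ContinuousOn H (Metric.closedBall 0 1) := by
    rw [← closure_ball _ one_ne_zero]; exact hH.2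
  -- the zeros form a compact subset of the open disk
  obtain ⟨ρ, hρ0, hρ1, hρ⟩ : ∃ ρ : ℝ, 0 ≤ ρ ∧ ρ < 1 ∧ ∀ z : ℂ, ‖z‖ < 1 → H z = 0 → ‖z‖ ≤ ρ := by
    have hcl : IsCompact (Metric.closedBall (0 : ℂ) 1 ∩ H ⁻¹' {0}) :=
      (isCompact_closedBall (0 : ℂ) 1).of_isClosed_subset
        (hcont.preimage_isClosed_of_isClosed Metric.isClosed_closedBall isClosed_singleton)
        Set.inter_subset_left
    rcases (Metric.closedBall (0 : ℂ) 1 ∩ H ⁻¹' {0}).eq_empty_or_nonempty with he | hne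
    · refine ⟨0, le_rfl, zero_lt_one, fun z hz hHz => ?_⟩
      have : z ∈ Metric.closedBall (0 : ℂ) 1 ∩ H ⁻¹' {0} := ⟨by simpa using hz.le, hHz⟩
      simp [he] at this
    · obtain ⟨b, ⟨hb, hHb⟩, hmax⟩ := hcl.exists_isMaxOn hne continuous_norm.continuousOn
      refine ⟨‖b‖, norm_nonneg _, ?_, fun z hz hHz => hmax ⟨by simpa using hz.le, hHz⟩⟩
      refine lt_of_le_of_ne (by simpa using hb) fun h => ?_
      have := h1 b h
      rw [hHb] at this
      simp at this
  obtain ⟨r, hr, hr1⟩ := exists_between hρ1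
  have hr0 : 0 ≤ r := hρ0.trans hr.le
  have hnr : ‖(r : ℂ)‖ = r := by simp [abs_of_nonneg hr0]
  have hHr : H r ≠ 0 := by
    intro h
    have := hρ r (by rw [hnr]; exact hr1) h
    rw [hnr] at this
    linarith
  have hδ : 0 < (1 - ρ ^ 2) * (1 - r ^ 2) := mul_pos (by nlinarith) (by nlinarith)
  have hδ1 : (1 - ρ ^ 2) * (1 - r ^ 2) ≤ 1 := 
    mul_le_one₀ (by nlinarith) (by nlinarith) (by nlinarith)
  set q : ℝ := 1 - (1 - ρ ^ 2) * (1 - r ^ 2) / 4 with hq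
  obtain ⟨K, hK⟩ := exists_pow_lt_of_lt_one (y := q) (x := ‖H r‖ ^ 2) (by positivity) (by linarith)
  refine exists_blaschke_aux (z₀ := r) (by rw [hnr]; exact hr1) (q := q) (by linarith) ?_ K H
    hH h1 hρ hK
  intro a ha
  have hs := normSq_blaschke a r
  rw [hnr] at hs
  have hb : ‖1 - conj a * (r : ℂ)‖ ≤ 2 := by
    refine (norm_sub_le _ _).trans ?_
    rw [norm_mul, RCLike.norm_conj, hnr, norm_one]
    nlinarith [norm_nonneg a]
  have hb2 : ‖1 - conj a * (r : ℂ)‖ ^ 2 ≤ 4 := by nlinarith [norm_nonneg (1 - conj a * (r : ℂ))]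
  have hc : (1 - ρ ^ 2) * (1 - r ^ 2) ≤ (1 - ‖a‖ ^ 2) * (1 - r ^ 2) := by
    apply mul_le_mul_of_nonneg_right _ (by nlinarith)
    nlinarith [norm_nonneg a]
  rw [hq]
  nlinarith

/-! ### Winding numbers -/

/-- A lift of the argument of a Blaschke factor along the unit circle: `arg (1 - conj a * e^{iθ})`
is continuous and periodic, so the factor has winding number one. -/
lemma blaschke_factor_exp {a : ℂ} (ha : ‖a‖ < 1) (θ : ℝ) :
    (exp (θ * I) - a) / (1 - conj a * exp (θ * I)) =
      exp ((θ - 2 * arg (1 - conj a * exp (θ * I)) : ℝ) * I) := by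
  have he : ‖exp (θ * I)‖ = 1 := norm_exp_ofReal_mul_I θ
  have hec : conj (exp (θ * I)) * exp (θ * I) = 1 := by
    rw [← Complex.normSq_eq_conj_mul_self, Complex.normSq_eq_norm_sq, he]; simp
  set w := 1 - conj a * exp (θ * I) with hw
  have hw0 : w ≠ 0 := one_sub_conj_mul_ne_zero ha he.le
  have h1 : exp (θ * I) - a = exp (θ * I) * conj w := by
    rw [hw]
    simp only [map_sub, map_one, map_mul, Complex.conj_conj]
    linear_combination a * hec
  have h2 : w = ‖w‖ * exp (arg w * I) := (norm_mul_exp_arg_mul_I w).symm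
  have h3 : conj w = ‖w‖ * exp (-(arg w * I)) := by
    conv_lhs => rw [h2]
    rw [map_mul, Complex.conj_ofReal, ← Complex.exp_conj]
    simp
  rw [h1, div_eq_iff hw0, h3]
  have h4 : exp ((θ - 2 * arg w : ℝ) * I) * exp (arg w * I) =
      exp (θ * I) * exp (-(arg w * I)) := by
    rw [← Complex.exp_add, ← Complex.exp_add]
    congr 1
    push_cast
    ring
  linear_combination -(‖w‖ : ℂ) * h4 - exp ((θ - 2 * arg w : ℝ) * I) * h2

lemma continuous_arg_blaschke {a : ℂ} (ha : ‖a‖ < 1) :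
    Continuous fun θ : ℝ => arg (1 - conj a * exp (θ * I)) := by
  rw [continuous_iff_continuousAt]
  intro θ
  refine ContinuousAt.comp (f := fun θ : ℝ => 1 - conj a * exp (θ * I)) (g := arg)
    (continuousAt_arg (Or.inl ?_)) (by fun_prop)
  have h1 : ‖conj a * exp (θ * I)‖ < 1 := by
    rw [norm_mul, norm_exp_ofReal_mul_I, RCLike.norm_conj, mul_one]; exact ha
  have := (Complex.re_le_norm (conj a * exp (θ * I))).trans_lt h1
  simp only [Complex.sub_re, Complex.one_re]
  linarith

lemma eq_of_exp_eq_one {g : ℝ → ℝ} (hg : Continuous g) (h : ∀ θ, exp (g θ * I) = 1) (x y : ℝ) :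
    g x = g y := by
  have hn : ∀ θ, ∃ n : ℤ, g θ / (2 * Real.pi) = n := by
    intro θ
    obtain ⟨n, hn⟩ := Complex.exp_eq_one_iff.1 (h θ)
    refine ⟨n, ?_⟩
    rw [div_eq_iff Real.two_pi_pos.ne']
    have := congrArg Complex.im hn
    simpa using this
  choose n hn using hn
  have hc : Continuous n := by
    rw [Int.isClosedEmbedding_coe_real.isInducing.continuous_iff]
    have : ((fun k : ℤ => (k : ℝ)) ∘ n) = fun θ => g θ / (2 * Real.pi) := by
      ext θ; exact (hn θ).symm
    rw [this]
    exact hg.div_const _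
  have hxy : n x = n y := PreconnectedSpace.constant inferInstance hc
  have := hn x
  rw [hxy, ← hn y] at this
  exact (div_left_inj' Real.two_pi_pos.ne').1 this

/-- Comparison of winding numbers: `ζ ^ N * conj f` winds `N - 1` times around the origin, a
Blaschke product of degree `d` winds `d` times. -/
lemma winding_eq {F : ℝ → ℝ} (hF : Continuous F) 
    (hper : ∀ θ, F (θ + 2 * Real.pi) = F θ + 2 * Real.pi)
    {N d : ℕ} {σ : ℂ} {z : Fin d → ℂ} (hσ : ‖σ‖ = 1) (hz : ∀ k, ‖z k‖ < 1)
    (h : ∀ θ : ℝ, exp ((N * θ - F θ : ℝ) * I) =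
      σ * ∏ k, (exp (θ * I) - z k) / (1 - conj (z k) * exp (θ * I))) : N = d + 1 := by
  have hσ' : σ = exp (arg σ * I) := by
    simpa [hσ] using (norm_mul_exp_arg_mul_I σ).symm
  let ψ : ℝ → ℝ := fun θ => ∑ k, (θ - 2 * arg (1 - conj (z k) * exp (θ * I)))
  have hψ : Continuous ψ :=
    continuous_finsetSum _ fun k _ =>
      continuous_id.sub (continuous_const.mul (continuous_arg_blaschke (hz k)))
  have hg := eq_of_exp_eq_one (g := fun θ => (N * θ - F θ) - (arg σ + ψ θ))
    (by fun_prop) (fun θ => by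
      have e : exp ((arg σ + ψ θ : ℝ) * I) = exp ((N * θ - F θ : ℝ) * I) := by
        rw [h θ]
        push_cast
        rw [add_mul, Complex.exp_add, ← hσ', Finset.prod_congr rfl
          fun k _ => blaschke_factor_exp (hz k) θ, ← Complex.exp_sum, ← Finset.sum_mul]
        simp only [ψ]
        push_cast
        rfl
      rw [Complex.ofReal_sub, sub_mul, Complex.exp_sub, e, div_self (Complex.exp_ne_zero _)])
    (0 + 2 * Real.pi) 0
  have hψper : ψ (0 + 2 * Real.pi) = ψ 0 + d * (2 * Real.pi) := by
    have : exp (((0 + 2 * Real.pi : ℝ) : ℂ) * I) = exp (((0 : ℝ) : ℂ) * I) := by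
      push_cast
      rw [zero_add, Complex.exp_two_pi_mul_I]
      simp
    simp only [ψ, this, Finset.sum_sub_distrib]
    simp
    ring
  simp only [hψper, hper] at hg
  have h2 : ((N : ℝ) - (d + 1)) * (2 * Real.pi) = 0 := by linarith
  have h3 := (mul_eq_zero.1 h2).resolve_right Real.two_pi_pos.ne'
  have h4 : (N : ℝ) = ((d + 1 : ℕ) : ℝ) := by push_cast; linarith
  exact_mod_cast h4

/-! ### Fourier coefficients and Blaschke products -/

lemma exists_exp_eq {z : ℂ} (hz : ‖z‖ = 1) : ∃ θ : ℝ, z = exp (θ * I) :=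
  ⟨arg z, by simpa [hz] using (norm_mul_exp_arg_mul_I z).symm⟩

/-- Continuity on the circle follows from continuity of the lift, using near `z₀` the branch of the
argument given by `arg z₀ + arg (z / z₀)`. -/
lemma continuousOn_of_lift {f : ℂ → ℂ} {F : ℝ → ℝ} (hF : Continuous F)
    (hf : ∀ θ : ℝ, f (exp (θ * I)) = exp (F θ * I)) : ContinuousOn f (Metric.sphere 0 1) := by
  intro z₀ hz₀
  have h0 : ‖z₀‖ = 1 := by simpa using hz₀
  have hne : z₀ ≠ 0 := by rintro rfl; simp at h0
  have hc : ContinuousAt (fun z : ℂ => exp (F (arg z₀ + arg (z / z₀)) * I)) z₀ := by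
    have h1 : ContinuousAt (fun z : ℂ => arg (z / z₀)) z₀ := by
      refine ContinuousAt.comp (f := fun z : ℂ => z / z₀) (g := arg) (continuousAt_arg ?_)
        (by fun_prop)
      rw [div_self hne]
      exact Complex.one_mem_slitPlane
    have h2 : Continuous fun t : ℝ => exp (F (arg z₀ + t) * I) := by fun_prop
    exact h2.continuousAt.comp (f := fun z : ℂ => arg (z / z₀)) h1
  refine hc.continuousWithinAt.congr_of_eventuallyEq_of_mem ?_ hz₀
  filter_upwards [self_mem_nhdsWithin] with z hz
  have h1 : ‖z‖ = 1 := by simpa using hz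
  rw [← hf]
  congr 1
  push_cast
  rw [add_mul, Complex.exp_add]
  have e0 : exp (arg z₀ * I) = z₀ := by simpa [h0] using norm_mul_exp_arg_mul_I z₀
  have e1 : exp (arg (z / z₀) * I) = z / z₀ := by
    simpa [h0, h1] using norm_mul_exp_arg_mul_I (z / z₀)
  rw [e0, e1, mul_div_cancel₀ _ hne]

lemma conj_eq_inv_of_norm {z : ℂ} (hz : ‖z‖ = 1) : conj z = z⁻¹ := by
  rw [Complex.inv_def, Complex.normSq_eq_norm_sq, hz]; simp

lemma circleAverage_conj {u : ℂ → ℂ} (hu : CircleIntegrable u 0 1) :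
    Real.circleAverage (fun z => conj (u z)) 0 1 = conj (Real.circleAverage u 0 1) := by
  have h := ContinuousLinearMap.circleAverage_comp_comm (Complex.conjCLE : ℂ →L[ℝ] ℂ) hu
  simpa [Function.comp_def] using h

lemma fCoeff_eq_circleAverage (f : ℂ → ℂ) (n : ℤ) :
    fCoeff f n = Real.circleAverage (fun z => f z * z ^ (-n)) 0 1 := by
  rw [Real.circleAverage_def, fCoeff, Complex.real_smul]
  congr 1
  · push_cast; rw [one_div]
  · congr 1
    ext θ
    simp only [circleMap, ofReal_one, one_mul, zero_add]
    rw [← Complex.exp_int_mul]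
    congr 2
    push_cast
    ring

lemma norm_blaschke_prod {d : ℕ} {σ : ℂ} {z : Fin d → ℂ} (hσ : ‖σ‖ = 1) (hz : ∀ k, ‖z k‖ < 1)
    {ζ : ℂ} (hζ : ‖ζ‖ = 1) : ‖σ * ∏ k, (ζ - z k) / (1 - conj (z k) * ζ)‖ = 1 := by
  rw [norm_mul, hσ, one_mul, norm_prod]
  apply Finset.prod_eq_one
  intro k _
  rw [norm_div, norm_blaschke_eq hζ, div_self]
  exact norm_ne_zero_iff.2 (one_sub_conj_mul_ne_zero (hz k) hζ.le)

lemma diffContOnCl_blaschke {d : ℕ} (σ : ℂ) {z : Fin d → ℂ} (hz : ∀ k, ‖z k‖ < 1) :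
    DiffContOnCl ℂ (fun ζ => σ * ∏ k, (ζ - z k) / (1 - conj (z k) * ζ)) (Metric.ball 0 1) := by
  have hd : DifferentiableOn ℂ (fun ζ => σ * ∏ k, (ζ - z k) / (1 - conj (z k) * ζ))
      (Metric.closedBall 0 1) := by
    refine DifferentiableOn.const_mul (DifferentiableOn.fun_finsetProd fun k _ => ?_) σ
    refine DifferentiableOn.div (by fun_prop) (by fun_prop) fun ζ hζ => ?_
    exact one_sub_conj_mul_ne_zero (hz k) (by simpa using hζ)
  refine ⟨hd.mono Metric.ball_subset_closedBall, ?_⟩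
  rw [closure_ball _ one_ne_zero]
  exact hd.continuousOn

/-- `ζ ^ n / B` has no Fourier coefficients above `n`, by the mean value property of `ζ ^ j * B`
for `j ≥ 1`. -/
lemma fCoeff_eq_zero_of_blaschke {f : ℂ → ℂ} {n d : ℕ} {σ : ℂ} {z : Fin d → ℂ} (hσ : ‖σ‖ = 1)
    (hz : ∀ k, ‖z k‖ < 1)
    (hf : ∀ ζ : ℂ, ‖ζ‖ = 1 → f ζ = ζ ^ n / (σ * ∏ k, (ζ - z k) / (1 - conj (z k) * ζ)))
    {m : ℤ} (hm : (n : ℤ) < m) : fCoeff f m = 0 := by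
  obtain ⟨j, hj⟩ : ∃ j : ℕ, m = n + (j + 1 : ℕ) := ⟨(m - n - 1).toNat, by omega⟩
  set B : ℂ → ℂ := fun ζ => σ * ∏ k, (ζ - z k) / (1 - conj (z k) * ζ) with hB
  have hd : DiffContOnCl ℂ (fun ζ => ζ ^ (j + 1) * B ζ) (Metric.ball 0 |1|) := by
    rw [abs_one]
    have : DiffContOnCl ℂ (fun ζ : ℂ => ζ ^ (j + 1)) (Metric.ball 0 1) :=
      Differentiable.diffContOnCl (by fun_prop)
    exact this.smul (diffContOnCl_blaschke σ hz)
  have hci : CircleIntegrable (fun ζ => ζ ^ (j + 1) * B ζ) 0 1 := by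
    apply ContinuousOn.circleIntegrable zero_le_one
    have := hd.2
    rw [abs_one, closure_ball _ one_ne_zero] at this
    exact this.mono Metric.sphere_subset_closedBall
  have hmean := hd.circleAverage
  simp only [zero_pow (Nat.succ_ne_zero j), zero_mul] at hmean
  rw [fCoeff_eq_circleAverage]
  refine Eq.trans ?_ ((circleAverage_conj hci).trans (by rw [hmean, map_zero]))
  apply Real.circleAverage_congr_sphere
  intro ζ hζ
  have h1 : ‖ζ‖ = 1 := by simpa using hζ
  have h0 : ζ ≠ 0 := by rintro rfl; simp at h1
  have hB1 : ‖B ζ‖ = 1 := norm_blaschke_prod hσ hz h1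
  simp only
  rw [hf ζ h1, show σ * ∏ k, (ζ - z k) / (1 - conj (z k) * ζ) = B ζ from rfl, map_mul, map_pow, conj_eq_inv_of_norm h1, conj_eq_inv_of_norm hB1, hj,
    neg_add, zpow_add₀ h0, zpow_neg, zpow_neg, zpow_natCast, zpow_natCast,
    inv_pow]
  field_simp

/-- the Fourier support of a circle homeomorphism is bounded above iff
`f(ζ) = ζⁿ/B(ζ)` for some `n ≥ 1` and a Blaschke product `B` of degree `n - 1`. -/
theorem circle_homeo_support_bddAbove_iff_blaschke
    (f : ℂ → ℂ) (hf : CirclePosHomeo f) :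
    BddAbove {n : ℤ | fCoeff f n ≠ 0} ↔
      ∃ (n : ℕ), 1 ≤ n ∧ ∃ (σ : ℂ) (z : Fin (n - 1) → ℂ), ‖σ‖ = 1 ∧ (∀ k, ‖z k‖ < 1) ∧
        ∀ ζ : ℂ, ‖ζ‖ = 1 →
          f ζ = ζ ^ n / (σ * ∏ k, (ζ - z k) / (1 - conj (z k) * ζ)) := by
  obtain ⟨F, hF, -, hper, hfF⟩ := hf
  constructor
  · rintro ⟨M, hM⟩
    have hcoef : ∀ m : ℤ, M < m → fCoeff f m = 0 := by
      intro m hm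
      by_contra h
      exact absurd (hM h) (not_le.2 hm)
    set N : ℕ := M.toNat with hN
    have hfc := continuousOn_of_lift hF hfF
    have hf1 : ∀ ζ : ℂ, ‖ζ‖ = 1 → ‖f ζ‖ = 1 := by
      intro ζ hζ
      obtain ⟨θ, rfl⟩ := exists_exp_eq hζ
      rw [hfF, norm_exp_ofReal_mul_I]
    have hhc : ContinuousOn (fun ζ => ζ ^ N * conj (f ζ)) (Metric.sphere 0 1) :=
      ContinuousOn.mul (by fun_prop) (Complex.continuous_conj.comp_continuousOn hfc)
    -- the moments of `ζ ^ N * conj f` are conjugates of the coefficients of `f` above `N`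
    obtain ⟨H, hH, hHh⟩ := exists_diskAlgebra_extension hhc (fun k => by
      have hci : CircleIntegrable (fun ζ => f ζ * ζ ^ (-((N + (k + 1) : ℕ) : ℤ))) 0 1 := by
        apply ContinuousOn.circleIntegrable zero_le_one
        refine hfc.mul (continuousOn_id.zpow₀ _ fun ζ hζ => Or.inl ?_)
        rintro rfl
        simp at hζ
      have hz := hcoef ((N + (k + 1) : ℕ) : ℤ) (by omega)
      rw [fCoeff_eq_circleAverage] at hz
      refine Eq.trans ?_ ((circleAverage_conj hci).trans (by rw [hz, map_zero]))
      apply Real.circleAverage_congr_sphere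
      intro ζ hζ
      have h1 : ‖ζ‖ = 1 := by simpa using hζ
      simp only [map_mul, zpow_neg, map_inv₀, zpow_natCast, map_pow, conj_eq_inv_of_norm h1,
        inv_pow, inv_inv]
      ring)
    obtain ⟨d, σ, z, hσ, hz, hprod⟩ := exists_blaschke hH (fun ζ hζ => by
      rw [hHh ζ hζ, norm_mul, norm_pow, hζ, RCLike.norm_conj, hf1 ζ hζ]; simp)
    have hBf : ∀ ζ : ℂ, ‖ζ‖ = 1 →
        ζ ^ N * conj (f ζ) = σ * ∏ k, (ζ - z k) / (1 - conj (z k) * ζ) :=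
      fun ζ hζ => (hHh ζ hζ).symm.trans (hprod ζ hζ)
    have hNd : N = d + 1 := by
      refine winding_eq hF hper hσ hz fun θ => ?_
      rw [← hBf _ (norm_exp_ofReal_mul_I θ), hfF, conj_eq_inv_of_norm (norm_exp_ofReal_mul_I _),
        ← Complex.exp_nat_mul, ← Complex.exp_neg, ← Complex.exp_add]
      congr 1
      push_cast
      ring
    refine ⟨d + 1, by omega, σ, z, hσ, hz, fun ζ hζ => ?_⟩
    have hζ0 : ζ ≠ 0 := by rintro rfl; simp at hζ
    have hfζ0 : f ζ ≠ 0 := norm_ne_zero_iff.1 (by rw [hf1 ζ hζ]; exact one_ne_zero)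
    change f ζ = ζ ^ (d + 1) / (σ * ∏ k : Fin d, (ζ - z k) / (1 - conj (z k) * ζ))
    rw [← hBf ζ hζ, conj_eq_inv_of_norm (hf1 ζ hζ), hNd]
    field_simp
  · rintro ⟨n, -, σ, z, hσ, hz, hfB⟩
    refine ⟨n, fun m hm => ?_⟩
    by_contra h
    exact hm (fCoeff_eq_zero_of_blaschke hσ hz hfB (not_le.1 h))
end

section
/- Every sense-preserving circle homeomorphism f : 𝕋 → 𝕋 is a uniform limit of circle diffeomorphisms of the form ζ ↦ B(ζ)/ζ^{n−1} where B is a finite Blaschke product of degree n; that is, for every ε > 0 there exist n ≥ 1 and a Blaschke product B of degree n such that ζ ↦ B(ζ)/ζ^{n−1} is a circle diffeomorphism and sup_{ζ∈𝕋} |f(ζ) − B(ζ)/ζ^{n−1}| < ε. Likewise, f is a uniform limit of circle diffeomorphisms of the form ζ ↦ ζ^{n+1}/B(ζ) where B is a finite Blaschke product of degree n. -/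
/-! Write `ζ = e^{iθ}`. If `p` is a polynomial with `p 0 = 1` and no zeros in the closed unit disk,
then on the circle `ζ^n conj (p ζ) / p ζ` is a Blaschke product `B` of degree `n`, whose
zeros are the reflections of the roots of `p` and one zero at the origin (`exists_blaschke`). Hence
`B / ζ^{n-1}` and `ζ^{n+1} / B`, up to a rotation, have the lifts `θ ∓ 2 arg p(e^{iθ})`, and it
suffices to approximate a lift `F` of the homeomorphism by such functions, with positive
derivative.

* `exists_poly_lift`: averaging `F` over `[θ, θ + h]` gives a `C¹` lift with derivative bounded
  below by a positive constant. Approximating this derivative uniformly by trigonometric polynomials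
  and integrating gives an approximation `θ + c + Im q(e^{iθ})` of `F`, with `q` a polynomial,
  `q 0 = 0`, and derivative still bounded below.
* `exists_log_approx`, `exists_poly_diffeo`: a polynomial `p` with `2 arg p ≈ ± Im q`, also for the
  `θ`-derivatives, is `p = (1 ± q / (2N))^N` with `N` large, which tends to `exp (± q / 2)`. It has
  no zeros in the closed disk, and `N log (1 ± q / (2N))` is a logarithm of it on the circle.
-/

open Complex MeasureTheory ComplexConjugate

/-- A sense-preserving diffeomorphism of the unit circle, described via a `C¹`
degree-one lift with everywhere positive derivative. -/
def CirclePosDiffeo (f : ℂ → ℂ) : Prop :=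
  ∃ F : ℝ → ℝ, ContDiff ℝ 1 F ∧ (∀ θ, 0 < deriv F θ) ∧
    (∀ θ, F (θ + 2 * Real.pi) = F θ + 2 * Real.pi) ∧
    ∀ θ : ℝ, f (Complex.exp (θ * Complex.I)) = Complex.exp (F θ * Complex.I)

/-! ### Approximation of circle homeomorphisms by polynomial lifts -/

/-- The curve `θ ↦ q(e^{iθ})` has derivative `i ζ q'(ζ)`, `ζ = e^{iθ}`. -/
lemma hasDerivAt_eval_exp (q : Polynomial ℂ) (θ : ℝ) :
    HasDerivAt (fun t : ℝ => q.eval (exp (t * I)))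
      (I * (exp (θ * I) * q.derivative.eval (exp (θ * I)))) θ := by
  have h1 : HasDerivAt (fun t : ℝ => exp ((t : ℂ) * I)) (exp (θ * I) * I) θ := by
    have := (((hasDerivAt_id (θ : ℂ)).mul_const I).cexp).comp_ofReal
    simpa using this
  have := (q.hasDerivAt (exp (θ * I))).comp θ h1
  refine this.congr_deriv ?_
  ring

lemma hasDerivAt_im {u : ℝ → ℂ} {u' : ℂ} {θ : ℝ} (h : HasDerivAt u u' θ) :
    HasDerivAt (fun t => (u t).im) u'.im θ :=
  (Complex.imCLM.hasFDerivAt.comp_hasDerivAt θ h)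

lemma exp_add_two_pi_mul_I (θ : ℝ) : exp (((θ + 2 * Real.pi : ℝ) : ℂ) * I) = exp (θ * I) := by
  push_cast
  rw [add_mul]
  exact Complex.exp_periodic _

/-- Trigonometric polynomials, written as a constant plus analytic and antianalytic parts that are
themselves derivatives in `θ`; the shape makes the constant term of the real part explicit. -/
lemma span_fourier_form [Fact (0 < 2 * Real.pi)] (x : C(AddCircle (2 * Real.pi), ℂ))
    (hx : x ∈ Submodule.span ℂ (Set.range <| @fourier (2 * Real.pi))) :
    ∃ (c : ℂ) (q₁ q₂ : Polynomial ℂ), q₁.eval 0 = 0 ∧ q₂.eval 0 = 0 ∧ ∀ θ : ℝ,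
      x (θ : AddCircle (2 * Real.pi)) = c + exp (θ * I) * q₁.derivative.eval (exp (θ * I)) +
        conj (exp (θ * I) * q₂.derivative.eval (exp (θ * I))) := by
  have hpi : (Real.pi : ℂ) ≠ 0 := by exact_mod_cast Real.pi_ne_zero
  have hf : ∀ (n : ℕ) (θ : ℝ), fourier (n : ℤ) (θ : AddCircle (2 * Real.pi)) = exp (θ * I) ^ n := by
    intro n θ
    rw [fourier_coe_apply, ← Complex.exp_nat_mul]
    congr 1
    push_cast
    field_simp
  induction hx using Submodule.span_induction with
  | mem x hx =>
    obtain ⟨n, rfl⟩ := hx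
    obtain ⟨k, rfl | rfl⟩ := n.eq_nat_or_neg
    · rcases Nat.eq_zero_or_pos k with rfl | hk
      · exact ⟨1, 0, 0, by simp, by simp, by intro θ; simp⟩
      · have hk' : (k : ℂ) ≠ 0 := by exact_mod_cast hk.ne'
        refine ⟨0, Polynomial.C (k : ℂ)⁻¹ * Polynomial.X ^ k, 0, by simp [hk.ne'], by simp, ?_⟩
        intro θ
        rw [hf]
        obtain ⟨m, rfl⟩ : ∃ m, k = m + 1 := ⟨k - 1, by omega⟩
        simp only [Polynomial.derivative_C_mul, Polynomial.derivative_X_pow, Polynomial.eval_mul,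
          Polynomial.eval_C, Polynomial.eval_pow, Polynomial.eval_X,
          Polynomial.eval_zero, mul_zero, map_zero, add_zero, zero_add, Nat.add_sub_cancel]
        field_simp
        ring
    · rcases Nat.eq_zero_or_pos k with rfl | hk
      · exact ⟨1, 0, 0, by simp, by simp, by intro θ; simp⟩
      · have hk' : (k : ℂ) ≠ 0 := by exact_mod_cast hk.ne'
        refine ⟨0, 0, Polynomial.C (k : ℂ)⁻¹ * Polynomial.X ^ k, by simp, by simp [hk.ne'], ?_⟩
        intro θ
        rw [fourier_neg, hf]
        obtain ⟨m, rfl⟩ : ∃ m, k = m + 1 := ⟨k - 1, by omega⟩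
        simp only [Polynomial.derivative_C_mul, Polynomial.derivative_X_pow, Polynomial.eval_mul,
          Polynomial.eval_C, Polynomial.eval_pow, Polynomial.eval_X, Polynomial.derivative_zero,
          Polynomial.eval_zero, mul_zero, add_zero, zero_add, Nat.add_sub_cancel]
        congr 1
        field_simp
        ring
  | zero => exact ⟨0, 0, 0, by simp, by simp, by intro θ; simp⟩
  | add x y _ _ hx hy =>
    obtain ⟨c, p, q, hp, hq, h⟩ := hx
    obtain ⟨c', p', q', hp', hq', h'⟩ := hy
    refine ⟨c + c', p + p', q + q', by simp [hp, hp'], by simp [hq, hq'], fun θ => ?_⟩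
    rw [ContinuousMap.add_apply, h, h']
    simp only [Polynomial.eval_add, map_add, map_mul]
    ring
  | smul a x _ hx =>
    obtain ⟨c, p, q, hp, hq, h⟩ := hx
    refine ⟨a * c, Polynomial.C a * p, Polynomial.C (conj a) * q, by simp [hp], by simp [hq],
      fun θ => ?_⟩
    rw [ContinuousMap.smul_apply, h]
    simp only [Polynomial.derivative_C_mul, Polynomial.eval_mul, Polynomial.eval_C, map_mul,
      smul_eq_mul, Complex.conj_conj]
    ring

/-- A continuous `2π`-periodic real function is uniformly close to `a + Re (ζ q'(ζ))`,
that is, to `a` plus the `θ`-derivative of `Im q(e^{iθ})`. -/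
lemma exists_trig_approx (g : ℝ → ℝ) (hg : Continuous g)
    (hper : Function.Periodic g (2 * Real.pi)) (η : ℝ) (hη : 0 < η) :
    ∃ (a : ℝ) (q : Polynomial ℂ), q.eval 0 = 0 ∧ ∀ θ : ℝ,
      |g θ - (a + (exp (θ * I) * q.derivative.eval (exp (θ * I))).re)| < η := by
  have : Fact (0 < 2 * Real.pi) := ⟨Real.two_pi_pos⟩
  have hcont : Continuous (fun t => ((hper.lift t : ℝ) : ℂ)) := by
    refine Complex.continuous_ofReal.comp ?_
    exact continuous_coinduced_dom.mpr hg
  let G : C(AddCircle (2 * Real.pi), ℂ) := ⟨_, hcont⟩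
  have hG : G ∈ (Submodule.span ℂ (Set.range <| @fourier (2 * Real.pi))).topologicalClosure := by
    rw [span_fourier_closure_eq_top]; trivial
  obtain ⟨x, hx, hd⟩ := Metric.mem_closure_iff.mp hG η hη
  obtain ⟨c, q₁, q₂, h1, h2, h⟩ := span_fourier_form x hx
  refine ⟨c.re, q₁ + q₂, by simp [h1, h2], fun θ => ?_⟩
  have hθ := (ContinuousMap.dist_apply_le_dist (f := G) (g := x)
    (θ : AddCircle (2 * Real.pi))).trans_lt hd
  rw [h, dist_eq_norm] at hθ
  refine lt_of_le_of_lt ?_ hθ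
  refine le_trans (le_of_eq ?_) (Complex.abs_re_le_norm _)
  congr 1
  have : G (θ : AddCircle (2 * Real.pi)) = (g θ : ℂ) := rfl
  rw [this]
  simp only [Polynomial.derivative_add, Polynomial.eval_add, mul_add, Complex.add_re,
    Complex.sub_re, Complex.conj_re, Complex.ofReal_re]
  ring

/-- Uniform continuity of a continuous function that changes by `2π` over each period, in the form
of a single step `h` that works at every point. -/
lemma exists_step (F : ℝ → ℝ) (hF : Continuous F)
    (hper : ∀ θ, F (θ + 2 * Real.pi) = F θ + 2 * Real.pi) (ε : ℝ) (hε : 0 < ε) :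
    ∃ h > 0, ∀ θ, |F (θ + h) - F θ| < ε := by
  have hc : UniformContinuousOn F (Set.Icc 0 (2 * Real.pi + 1)) :=
    isCompact_Icc.uniformContinuousOn_of_continuous hF.continuousOn
  obtain ⟨δ, hδ, H⟩ := Metric.uniformContinuousOn_iff.mp hc ε hε
  have hpi := Real.two_pi_pos
  refine ⟨min (δ / 2) 1, by positivity, fun θ => ?_⟩
  have hp : Function.Periodic (fun t => F (t + min (δ / 2) 1) - F t) (2 * Real.pi) := by
    intro t
    simp only
    rw [show t + 2 * Real.pi + min (δ / 2) 1 = (t + min (δ / 2) 1) + 2 * Real.pi by ring,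
      hper, hper]
    ring
  obtain ⟨y, hy, hyθ⟩ := hp.exists_mem_Ico₀ hpi θ
  rw [hyθ]
  have hm1 : min (δ / 2) 1 ≤ 1 := min_le_right _ _
  have hm2 : min (δ / 2) 1 ≤ δ / 2 := min_le_left _ _
  have hm3 : 0 < min (δ / 2) 1 := by positivity
  have := H (y + min (δ / 2) 1) ⟨by linarith [hy.1], by linarith [hy.2]⟩ y
    ⟨hy.1, by linarith [hy.2]⟩ (by
      rw [Real.dist_eq, add_sub_cancel_left, abs_of_pos hm3]; linarith)
  rwa [Real.dist_eq] at this

/-- Every circle homeomorphism lift is uniformly close to `θ + c + Im q(e^{iθ})` with `q` a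
polynomial for which the derivative `1 + Re (ζ q'(ζ))` is bounded below by a positive constant.
The lift is first replaced by its forward average `h⁻¹ ∫_θ^{θ+h} F`, whose derivative
`(F (θ + h) - F θ) / h` is continuous and positive. -/
lemma exists_poly_lift (F : ℝ → ℝ) (hF : Continuous F) (hmono : StrictMono F)
    (hper : ∀ θ, F (θ + 2 * Real.pi) = F θ + 2 * Real.pi) (ε : ℝ) (hε : 0 < ε) :
    ∃ (c : ℝ) (q : Polynomial ℂ) (δ : ℝ), 0 < δ ∧ q.eval 0 = 0 ∧
      (∀ θ : ℝ, δ ≤ 1 + (exp (θ * I) * q.derivative.eval (exp (θ * I))).re) ∧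
      ∀ θ : ℝ, |F θ - (θ + c + (q.eval (exp (θ * I))).im)| < ε := by
  have hpi := Real.two_pi_pos
  obtain ⟨h, hh, hstep⟩ := exists_step F hF hper (ε / 2) (by positivity)
  set Φ : ℝ → ℝ := fun x => ∫ t in (0 : ℝ)..x, F t with hΦdef
  have hΦ : ∀ x, HasDerivAt Φ (F x) x := fun x =>
    (hF.integral_hasStrictDerivAt 0 x).hasDerivAt
  set G : ℝ → ℝ := fun θ => (Φ (θ + h) - Φ θ) / h with hGdef
  set g : ℝ → ℝ := fun θ => (F (θ + h) - F θ) / h with hgdef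
  have hG : ∀ θ, HasDerivAt G (g θ) θ := fun θ =>
    (((hΦ (θ + h)).comp_add_const θ h).sub (hΦ θ)).div_const h
  have hFG : ∀ θ, |F θ - G θ| < ε / 2 := by
    intro θ
    obtain ⟨y, hy, hy'⟩ := exists_hasDerivAt_eq_slope Φ F (a := θ) (b := θ + h) (by linarith)
      (fun x _ => (hΦ x).continuousAt.continuousWithinAt) (fun x _ => hΦ x)
    have hGy : G θ = F y := by rw [hy', hGdef]; simp
    have h1 := hmono hy.1
    have h2 := hmono hy.2
    have h3 := (abs_lt.mp (hstep θ)).2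
    rw [hGy, abs_lt]
    constructor <;> linarith
  have hGper : G (2 * Real.pi) = G 0 + 2 * Real.pi := by
    have hK : ∀ x, HasDerivAt (fun t => Φ (t + 2 * Real.pi) - Φ t - 2 * Real.pi * t) 0 x := by
      intro x
      have := (((hΦ (x + 2 * Real.pi)).comp_add_const x (2 * Real.pi)).sub (hΦ x)).sub
        ((hasDerivAt_id x).const_mul (2 * Real.pi))
      refine this.congr_deriv ?_
      rw [hper]; ring
    have := is_const_of_deriv_eq_zero (fun x => (hK x).differentiableAt) (fun x => (hK x).deriv) h 0
    simp only [hGdef, zero_add] at this ⊢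
    rw [add_comm (2 * Real.pi) h]
    field_simp
    linarith
  have hgc : Continuous g := by fun_prop
  have hgper : Function.Periodic g (2 * Real.pi) := by
    intro t
    simp only [hgdef]
    rw [show t + 2 * Real.pi + h = (t + h) + 2 * Real.pi by ring, hper, hper]
    ring
  obtain ⟨δ₀, hδ₀, hgδ⟩ : ∃ δ₀ > 0, ∀ θ, δ₀ ≤ g θ := by
    obtain ⟨x, _, hx⟩ := isCompact_Icc.exists_isMinOn (s := Set.Icc 0 (2 * Real.pi))
      ⟨0, by constructor <;> linarith⟩ hgc.continuousOn
    refine ⟨g x, div_pos (sub_pos.mpr (hmono (by linarith))) hh, fun θ => ?_⟩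
    obtain ⟨y, hy, hyθ⟩ := hgper.exists_mem_Ico₀ hpi θ
    rw [hyθ]
    exact hx ⟨hy.1, hy.2.le⟩
  obtain ⟨η, hη, hη1, hη2⟩ : ∃ η > 0, 2 * η ≤ δ₀ / 2 ∧ 2 * η * (2 * Real.pi) ≤ ε / 2 := by
    refine ⟨min (δ₀ / 4) (ε / (8 * Real.pi)), by positivity, ?_, ?_⟩
    · linarith [min_le_left (δ₀ / 4) (ε / (8 * Real.pi))]
    · have := min_le_right (δ₀ / 4) (ε / (8 * Real.pi))
      rw [le_div_iff₀ (by positivity)] at this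
      linarith
  obtain ⟨a, q, hq0, hq⟩ := exists_trig_approx g hgc hgper η hη
  have hqd : ∀ θ : ℝ, HasDerivAt (fun t : ℝ => (q.eval (exp (t * I))).im)
      (exp (θ * I) * q.derivative.eval (exp (θ * I))).re θ := fun θ =>
    (hasDerivAt_im (hasDerivAt_eval_exp q θ)).congr_deriv (by simp [Complex.mul_im])
  have hq2π : exp (((2 * Real.pi : ℝ) : ℂ) * I) = exp (((0 : ℝ) : ℂ) * I) := by
    simpa only [zero_add] using exp_add_two_pi_mul_I 0
  -- The mean of `g` over a period is `1`, so the constant term `a` is close to `1`.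
  have ha : |1 - a| ≤ η := by
    have hD : ∀ θ, HasDerivAt (fun t : ℝ => G t - a * t - (q.eval (exp (t * I))).im)
        (g θ - a - (exp (θ * I) * q.derivative.eval (exp (θ * I))).re) θ := fun θ =>
      (((hG θ).sub ((hasDerivAt_id θ).const_mul a)).sub (hqd θ)).congr_deriv (by simp)
    have := norm_image_sub_le_of_norm_deriv_le_segment' (a := 0) (b := 2 * Real.pi) (C := η)
      (fun x _ => (hD x).hasDerivWithinAt)
      (fun x _ => by rw [Real.norm_eq_abs, sub_sub]; exact (hq x).le) (2 * Real.pi)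
      ⟨hpi.le, le_refl _⟩
    simp only [hq2π, hGper] at this
    rw [Real.norm_eq_abs, show G 0 + 2 * Real.pi - a * (2 * Real.pi) -
      (q.eval (exp (((0 : ℝ) : ℂ) * I))).im - (G 0 - a * 0 -
        (q.eval (exp (((0 : ℝ) : ℂ) * I))).im) = (1 - a) * (2 * Real.pi) by ring, abs_mul,
      abs_of_pos hpi, sub_zero] at this
    exact le_of_mul_le_mul_right this hpi
  have hq' : ∀ θ : ℝ, |g θ - 1 - (exp (θ * I) * q.derivative.eval (exp (θ * I))).re| ≤ 2 * η := by
    intro θ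
    have h1 := abs_lt.mp (hq θ)
    have h2 := abs_le.mp ha
    rw [abs_le]
    constructor <;> linarith [h1.1, h1.2, h2.1, h2.2]
  set c : ℝ := G 0 - (q.eval (exp (((0 : ℝ) : ℂ) * I))).im with hc
  refine ⟨c, q, δ₀ / 2, by positivity, hq0, fun θ => ?_, fun θ => ?_⟩
  · have := (abs_le.mp (hq' θ)).2
    linarith [hgδ θ]
  · have hE : ∀ θ, HasDerivAt (fun t : ℝ => G t - t - (q.eval (exp (t * I))).im)
        (g θ - 1 - (exp (θ * I) * q.derivative.eval (exp (θ * I))).re) θ := fun θ =>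
      ((hG θ).sub (hasDerivAt_id θ)).sub (hqd θ)
    have hp : Function.Periodic (fun t : ℝ => F t - (t + c + (q.eval (exp (t * I))).im))
        (2 * Real.pi) := by
      intro t
      simp only [exp_add_two_pi_mul_I, hper]
      ring
    obtain ⟨y, hy, hyθ⟩ := hp.exists_mem_Ico₀ hpi θ
    rw [hyθ]
    have h1 := norm_image_sub_le_of_norm_deriv_le_segment' (a := 0) (b := 2 * Real.pi)
      (C := 2 * η) (fun x _ => (hE x).hasDerivWithinAt) (fun x _ => hq' x) y ⟨hy.1, hy.2.le⟩
    rw [Real.norm_eq_abs] at h1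
    have h2 : 2 * η * (y - 0) ≤ ε / 2 :=
      le_trans (mul_le_mul_of_nonneg_left (by linarith [hy.2]) (by positivity)) hη2
    have h3 := abs_le.mp (h1.trans h2)
    have h4 := abs_lt.mp (hFG y)
    rw [abs_lt]
    constructor <;> linarith [h3.1, h3.2, h4.1, h4.2]

/-! ### Lifts given by the argument of a zero-free polynomial -/

/-- `(1 + q/N)^N` approximates `exp q` on the closed unit disk, together with the logarithmic
derivative. -/
lemma exists_log_approx (q : Polynomial ℂ) (ε : ℝ) (hε : 0 < ε) :
    ∃ N : ℕ, 0 < N ∧ ∀ z : ℂ, ‖z‖ ≤ 1 →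
      ‖q.eval z / N‖ ≤ 1 / 2 ∧
      ‖N * Complex.log (1 + q.eval z / N) - q.eval z‖ < ε ∧
      ‖z * q.derivative.eval z / (1 + q.eval z / N) - z * q.derivative.eval z‖ < ε := by
  obtain ⟨M₁, hM₁⟩ := (isCompact_closedBall (0 : ℂ) 1).exists_bound_of_continuousOn
    q.continuous.continuousOn
  obtain ⟨M₂, hM₂⟩ := (isCompact_closedBall (0 : ℂ) 1).exists_bound_of_continuousOn
    q.derivative.continuous.continuousOn
  obtain ⟨M, hM, h1, h2⟩ : ∃ M : ℝ, 0 < M ∧ M₁ ≤ M ∧ M₂ ≤ M :=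
    ⟨max 1 (max M₁ M₂), by positivity, by simp, by simp⟩
  obtain ⟨N, hN⟩ := exists_nat_gt (2 * M + 2 * M ^ 2 / ε)
  have hN0 : (0 : ℝ) < N := lt_trans (by positivity) hN
  have hNc : (N : ℂ) ≠ 0 := by exact_mod_cast hN0.ne'
  have hN1 : 2 * M < N := lt_trans (by linarith [show 0 < 2 * M ^ 2 / ε by positivity]) hN
  have hN2 : 2 * M ^ 2 / N < ε := by
    rw [div_lt_comm₀ hN0 hε]
    linarith
  refine ⟨N, by exact_mod_cast hN0, fun z hz => ?_⟩
  have hq : ‖q.eval z‖ ≤ M := (hM₁ z (by simpa using hz)).trans h1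
  have hq' : ‖z * q.derivative.eval z‖ ≤ M := by
    rw [norm_mul]
    have := (hM₂ z (by simpa using hz)).trans h2
    nlinarith [norm_nonneg z, norm_nonneg (q.derivative.eval z)]
  set w : ℂ := q.eval z / N with hw
  have hqw : q.eval z = N * w := by rw [hw]; field_simp
  have hwM : ‖w‖ ≤ M / N := by
    rw [hw, norm_div, Complex.norm_natCast]
    gcongr
  have hw2 : ‖w‖ ≤ 1 / 2 := hwM.trans (by rw [div_le_iff₀ hN0]; linarith)
  have hMN : M * (M / N) < ε / 2 := by
    have : M * (M / N) = (2 * M ^ 2 / N) / 2 := by ring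
    linarith
  refine ⟨hw2, ?_, ?_⟩
  · rw [hqw, ← mul_sub, norm_mul, Complex.norm_natCast]
    have hl := Complex.norm_log_one_add_sub_self_le (z := w) (by linarith)
    have hinv : (1 - ‖w‖)⁻¹ ≤ 2 := by
      rw [inv_le_comm₀ (by linarith) (by norm_num)]; linarith
    have hinv0 : 0 ≤ (1 - ‖w‖)⁻¹ := inv_nonneg.mpr (by linarith)
    calc (N : ℝ) * ‖Complex.log (1 + w) - w‖ ≤ N * (‖w‖ ^ 2 * (1 - ‖w‖)⁻¹ / 2) := by gcongr
      _ ≤ N * ((M / N) ^ 2 * 2 / 2) := by gcongr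
      _ = M * (M / N) := by field_simp
      _ < ε := by linarith
  · have hlow : 1 / 2 ≤ ‖1 + w‖ := by
      have := norm_sub_le_norm_add (1 : ℂ) w
      rw [norm_one] at this
      linarith
    have hne : 1 + w ≠ 0 := norm_pos_iff.mp (by linarith)
    have : z * q.derivative.eval z / (1 + w) - z * q.derivative.eval z =
        -(z * q.derivative.eval z * w / (1 + w)) := by field_simp; ring
    rw [this, norm_neg, norm_div, norm_mul]
    rw [div_lt_iff₀ (by linarith)]
    calc _ ≤ M * (M / N) := by gcongr
      _ < ε * (1 / 2) := by linarith
      _ ≤ _ := by gcongr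

/-- A circle homeomorphism lift `F` is uniformly close to the diffeomorphism lift
`θ + c + 2 s arg p(e^{iθ})`, where `s = ±1`, `p` is a polynomial without zeros in the closed unit
disk, `p 0 = 1`, and `arg p` is the imaginary part of a logarithm `L` of `p` along the circle. -/
lemma exists_poly_diffeo (F : ℝ → ℝ) (hF : Continuous F) (hmono : StrictMono F)
    (hper : ∀ θ, F (θ + 2 * Real.pi) = F θ + 2 * Real.pi) (ε : ℝ) (hε : 0 < ε)
    (s : ℝ) (hs : s * s = 1) :
    ∃ (c : ℝ) (p : Polynomial ℂ) (L : ℝ → ℂ), p.eval 0 = 1 ∧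
      (∀ z : ℂ, ‖z‖ ≤ 1 → p.eval z ≠ 0) ∧
      (∀ θ : ℝ, p.eval (exp (θ * I)) = exp (L θ)) ∧
      ContDiff ℝ 1 (fun θ => θ + c + 2 * s * (L θ).im) ∧
      (∀ θ, 0 < deriv (fun θ => θ + c + 2 * s * (L θ).im) θ) ∧
      (∀ θ, L (θ + 2 * Real.pi) = L θ) ∧
      ∀ θ, |F θ - (θ + c + 2 * s * (L θ).im)| < ε := by
  obtain ⟨c, q₀, δ, hδ, hq0, hpos, happ⟩ := exists_poly_lift F hF hmono hper (ε / 2) (by positivity)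
  set q : Polynomial ℂ := Polynomial.C ((s / 2 : ℝ) : ℂ) * q₀ with hq
  obtain ⟨N, hN, hlog⟩ := exists_log_approx q (min (ε / 4) (δ / 4)) (by positivity)
  have hNc : (N : ℂ) ≠ 0 := by exact_mod_cast hN.ne'
  have habs : |2 * s| = 2 := by
    have : |s| = 1 := by
      rcases mul_self_eq_one_iff.mp hs with h | h <;> simp [h]
    rw [abs_mul, this]; norm_num
  have hζ : ∀ θ : ℝ, ‖exp (θ * I)‖ ≤ 1 := fun θ => (Complex.norm_exp_ofReal_mul_I θ).le
  have hslit : ∀ z : ℂ, ‖z‖ ≤ 1 → 1 + q.eval z / N ∈ Complex.slitPlane := fun z hz =>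
    Complex.mem_slitPlane_of_norm_lt_one ((hlog z hz).1.trans_lt (by norm_num))
  set L : ℝ → ℂ := fun θ => N * Complex.log (1 + q.eval (exp (θ * I)) / N) with hL
  have hLd : ∀ θ : ℝ, HasDerivAt L (I * (exp (θ * I) * q.derivative.eval (exp (θ * I)) /
      (1 + q.eval (exp (θ * I)) / N))) θ := by
    intro θ
    have h := ((((hasDerivAt_eval_exp q θ).div_const (N : ℂ)).const_add 1).clog_real
      (hslit _ (hζ θ))).const_mul (N : ℂ)
    refine h.congr_deriv ?_
    have := Complex.slitPlane_ne_zero (hslit _ (hζ θ))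
    field_simp
  have hHd : ∀ θ : ℝ, HasDerivAt (fun θ : ℝ => θ + c + 2 * s * (L θ).im)
      (1 + 2 * s * (exp (θ * I) * q.derivative.eval (exp (θ * I)) /
      (1 + q.eval (exp (θ * I)) / N)).re) θ := by
    intro θ
    have h := ((hasDerivAt_id θ).add_const c).add ((hasDerivAt_im (hLd θ)).const_mul (2 * s))
    refine h.congr_deriv ?_
    rw [Complex.I_mul_im]
  have hderiv : deriv (fun θ => θ + c + 2 * s * (L θ).im) = fun θ : ℝ =>
      (1 + 2 * s * (exp (θ * I) * q.derivative.eval (exp (θ * I)) /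
      (1 + q.eval (exp (θ * I)) / N)).re) := funext fun θ => (hHd θ).deriv
  refine ⟨c, (1 + Polynomial.C (N : ℂ)⁻¹ * q) ^ N, L, ?_, ?_, ?_, ?_, ?_, ?_, ?_⟩
  · simp [hq, hq0]
  · intro z hz
    have := Complex.slitPlane_ne_zero (hslit z hz)
    rw [div_eq_inv_mul] at this
    simpa using pow_ne_zero N this
  · intro θ
    have := Complex.slitPlane_ne_zero (hslit _ (hζ θ))
    rw [hL]
    simp only
    rw [Complex.exp_nat_mul, Complex.exp_log this, div_eq_inv_mul]
    simp
  · rw [contDiff_one_iff_deriv, hderiv]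
    refine ⟨fun θ => (hHd θ).differentiableAt, ?_⟩
    have he : Continuous fun θ : ℝ => exp (θ * I) := by fun_prop
    refine continuous_const.add (continuous_const.mul (Complex.continuous_re.comp ?_))
    refine (he.mul (q.derivative.continuous.comp he)).div
      (continuous_const.add ((q.continuous.comp he).div_const _)) fun θ => ?_
    exact Complex.slitPlane_ne_zero (hslit _ (hζ θ))
  · intro θ
    rw [hderiv]
    simp only
    have h1 := (hlog _ (hζ θ)).2.2
    have h2 := (Complex.abs_re_le_norm _).trans_lt h1
    rw [Complex.sub_re] at h2
    have h3 : (exp (θ * I) * q.derivative.eval (exp (θ * I))).re =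
        s / 2 * (exp (θ * I) * q₀.derivative.eval (exp (θ * I))).re := by
      rw [hq, Polynomial.derivative_C_mul, Polynomial.eval_mul, Polynomial.eval_C,
        mul_left_comm, Complex.re_ofReal_mul]
    rw [h3] at h2
    set A := (exp (θ * I) * q.derivative.eval (exp (θ * I)) /
      (1 + q.eval (exp (θ * I)) / N)).re
    set R := (exp (θ * I) * q₀.derivative.eval (exp (θ * I))).re with hR
    have h4 : |2 * s * (A - s / 2 * R)| < δ := by
      rw [abs_mul, habs]
      linarith [min_le_right (ε / 4) (δ / 4)]
    have h5 : 2 * s * (A - s / 2 * R) = 2 * s * A - R := by linear_combination (-R) * hs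
    rw [h5] at h4
    linarith [(abs_lt.mp h4).1, hpos θ]
  · intro θ
    simp only [hL, exp_add_two_pi_mul_I]
  · intro θ
    have h1 := (hlog _ (hζ θ)).2.1
    have h2 := (Complex.abs_im_le_norm _).trans_lt h1
    rw [Complex.sub_im] at h2
    have h3 : (q.eval (exp (θ * I))).im = s / 2 * (q₀.eval (exp (θ * I))).im := by
      rw [hq, Polynomial.eval_mul, Polynomial.eval_C, Complex.im_ofReal_mul]
    rw [h3] at h2
    change |(L θ).im - _| < _ at h2
    set Q := (q₀.eval (exp (θ * I))).im with hQ
    have h4 : |2 * s * ((L θ).im - s / 2 * Q)| < ε / 2 := by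
      rw [abs_mul, habs]
      linarith [min_le_left (ε / 4) (δ / 4)]
    have h5 : 2 * s * ((L θ).im - s / 2 * Q) = 2 * s * (L θ).im - Q := by
      linear_combination (-Q) * hs
    rw [h5] at h4
    have h6 := happ θ
    rw [abs_lt] at h4 h6 ⊢
    constructor <;> linarith [h4.1, h4.2, h6.1, h6.2]

/-! ### Blaschke products and zero-free polynomials -/

/-- The Blaschke factor with zero at the reflection `1 / conj a` of `a`. -/
lemma blaschke_factor_reflect (a ζ : ℂ) (ha : 1 < ‖a‖) (hζ : ‖ζ‖ = 1) :
    (ζ - (conj a)⁻¹) / (1 - conj (conj a)⁻¹ * ζ) = ζ * conj (1 - ζ / a) / (1 - ζ / a) := by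
  have ha0 : a ≠ 0 := norm_pos_iff.mp (by linarith)
  have hac : conj a ≠ 0 := (map_ne_zero _).mpr ha0
  have hne : a - ζ ≠ 0 := by
    intro h
    rw [sub_eq_zero.mp h] at ha
    linarith
  have hcc : ζ * conj ζ = 1 := by
    rw [Complex.mul_conj, Complex.normSq_eq_norm_sq, hζ]; norm_num
  have hden : 1 - conj (conj a)⁻¹ * ζ = 1 - ζ / a := by
    rw [map_inv₀, Complex.conj_conj]; ring
  rw [hden]
  congr 1
  rw [map_sub, map_div₀, map_one, mul_sub, ← mul_div_assoc, hcc]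
  ring

lemma blaschke_list (l : List ℂ) (hl : ∀ a ∈ l, 1 < ‖a‖) (ζ : ℂ) (hζ : ‖ζ‖ = 1) :
    (l.map fun a => (ζ - (conj a)⁻¹) / (1 - conj (conj a)⁻¹ * ζ)).prod =
      ζ ^ l.length * conj (l.map fun a => 1 - ζ / a).prod / (l.map fun a => 1 - ζ / a).prod := by
  induction l with
  | nil => simp
  | cons a l ih =>
    rw [List.map_cons, List.prod_cons, ih fun b hb => hl b (List.mem_cons_of_mem _ hb),
      blaschke_factor_reflect a ζ (hl a List.mem_cons_self) hζ]
    simp only [List.map_cons, List.prod_cons, List.length_cons, map_mul]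
    rw [div_mul_div_comm]
    ring

/-- On the circle, `ζ^n conj (p ζ) / p ζ` is a Blaschke product of degree `n` when the polynomial
`p` has no zeros in the closed disk. The zeros are the reflections of the roots of `p`,
together with one extra zero at the origin to make the degree positive. -/
lemma exists_blaschke_s11 (p : Polynomial ℂ) (hp0 : p.eval 0 = 1)
    (hp : ∀ z : ℂ, ‖z‖ ≤ 1 → p.eval z ≠ 0) :
    ∃ (n : ℕ) (z : Fin n → ℂ), 1 ≤ n ∧ (∀ k, ‖z k‖ < 1) ∧ ∀ ζ : ℂ, ‖ζ‖ = 1 →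
      ∏ k, (ζ - z k) / (1 - conj (z k) * ζ) = ζ ^ n * conj (p.eval ζ) / p.eval ζ := by
  have hpne : p ≠ 0 := by rintro rfl; simp at hp0
  set l := p.roots.toList with hl
  have hl1 : ∀ a ∈ l, 1 < ‖a‖ := by
    intro a ha
    by_contra! h
    exact hp a h ((Polynomial.mem_roots hpne).mp (Multiset.mem_toList.mp ha))
  have heval : ∀ ζ, p.eval ζ = (l.map fun a => 1 - ζ / a).prod := by
    have hform : ∀ ζ, p.eval ζ = p.leadingCoeff * (l.map fun a => ζ - a).prod := by
      intro ζ
      rw [(IsAlgClosed.splits p).eval_eq_prod_roots ζ, hl]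
      conv_lhs => rw [← Multiset.coe_toList p.roots]
      rw [Multiset.map_coe, Multiset.prod_coe]
    have hmul : ∀ (m : List ℂ) (ζ : ℂ), (∀ a ∈ m, 1 < ‖a‖) → (m.map fun a => ζ - a).prod =
        (m.map fun a => 0 - a).prod * (m.map fun a => 1 - ζ / a).prod := by
      intro m ζ hm
      rw [← List.prod_map_mul]
      congr 1
      refine List.map_congr_left fun a ha => ?_
      have : a ≠ 0 := norm_pos_iff.mp (by linarith [hm a ha])
      field_simp
      ring
    intro ζ
    rw [hform, hmul l ζ hl1, ← mul_assoc, ← hform 0, hp0, one_mul]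
  set m := (0 : ℂ) :: l.map fun a => (conj a)⁻¹ with hm
  refine ⟨m.length, fun k => m[k.1], by simp [hm], fun k => ?_, fun ζ hζ => ?_⟩
  · have hk : m[k.1] ∈ m := List.getElem_mem _
    change ‖m[k.1]‖ < 1
    generalize m[k.1] = b at hk ⊢
    rw [hm, List.mem_cons, List.mem_map] at hk
    rcases hk with rfl | ⟨a, ha, rfl⟩
    · simp
    · rw [norm_inv, RCLike.norm_conj]
      exact inv_lt_one_of_one_lt₀ (hl1 a ha)
  · rw [Fin.prod_univ_fun_getElem m (fun b => (ζ - b) / (1 - conj b * ζ)), heval, hm,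
      List.map_cons, List.prod_cons, List.map_map]
    have := blaschke_list l hl1 ζ hζ
    simp only [Function.comp_def, this, List.length_cons, List.length_map]
    simp only [map_zero]
    ring

/-! ### The approximation theorem -/

lemma norm_exp_sub_exp_le (a b : ℝ) : ‖exp (a * I) - exp (b * I)‖ ≤ |a - b| := by
  have h : exp (a * I) - exp (b * I) = exp (b * I) * (exp (I * ((a - b : ℝ) : ℂ)) - 1) := by
    rw [mul_sub, ← Complex.exp_add, mul_one]
    congr 2
    push_cast
    ring
  rw [h, norm_mul, Complex.norm_exp_ofReal_mul_I, one_mul]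
  exact Real.norm_exp_I_mul_ofReal_sub_one_le

/-- every circle homeomorphism is a uniform limit of circle
diffeomorphisms of the form `ζ ↦ B(ζ)/ζ^{n−1}` and also of the form
`ζ ↦ ζ^{n+1}/B(ζ)`, with `B` a finite Blaschke product of degree `n`. -/
theorem circle_homeo_uniform_limit_of_blaschke_diffeos
    (f : ℂ → ℂ) (hf : CirclePosHomeo f) (ε : ℝ) (hε : 0 < ε) :
    (∃ (n : ℕ), 1 ≤ n ∧ ∃ (σ : ℂ) (z : Fin n → ℂ), ‖σ‖ = 1 ∧ (∀ k, ‖z k‖ < 1) ∧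
      CirclePosDiffeo (fun ζ => (σ * ∏ k, (ζ - z k) / (1 - conj (z k) * ζ)) / ζ ^ (n - 1)) ∧
      ∀ ζ : ℂ, ‖ζ‖ = 1 →
        ‖f ζ - (σ * ∏ k, (ζ - z k) / (1 - conj (z k) * ζ)) / ζ ^ (n - 1)‖ < ε) ∧
    (∃ (n : ℕ) (σ : ℂ) (z : Fin n → ℂ), ‖σ‖ = 1 ∧ (∀ k, ‖z k‖ < 1) ∧
      CirclePosDiffeo (fun ζ => ζ ^ (n + 1) / (σ * ∏ k, (ζ - z k) / (1 - conj (z k) * ζ))) ∧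
      ∀ ζ : ℂ, ‖ζ‖ = 1 →
        ‖f ζ - ζ ^ (n + 1) / (σ * ∏ k, (ζ - z k) / (1 - conj (z k) * ζ))‖ < ε) := by
  obtain ⟨F, hF, hmono, hper, hfF⟩ := hf
  -- A map with a suitable lift `H` close to `F` satisfies both requirements.
  have key : ∀ (u : ℂ → ℂ) (H : ℝ → ℝ), (∀ θ : ℝ, u (exp (θ * I)) = exp (H θ * I)) →
      (∀ θ, |F θ - H θ| < ε) → ∀ ζ : ℂ, ‖ζ‖ = 1 → ‖f ζ - u ζ‖ < ε := by
    intro u H hu hH ζ hζ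
    obtain ⟨θ, rfl⟩ := Complex.norm_eq_one_iff ζ |>.mp hζ
    rw [hfF, hu]
    exact (norm_exp_sub_exp_le _ _).trans_lt (hH θ)
  have hconj : ∀ w : ℂ, conj w = w - 2 * w.im * I := by
    intro w
    apply Complex.ext <;> simp
    ring
  constructor
  · obtain ⟨c, p, L, hp0, hp, hL, hC, hd, hLper, happ⟩ :=
      exists_poly_diffeo F hF hmono hper ε hε (-1) (by norm_num)
    obtain ⟨n, z, hn, hz, hB⟩ := exists_blaschke_s11 p hp0 hp
    have hlift : ∀ θ : ℝ, (exp (c * I) * ∏ k, (exp (θ * I) - z k) /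
        (1 - conj (z k) * exp (θ * I))) / exp (θ * I) ^ (n - 1) =
        exp (((θ + c + 2 * (-1) * (L θ).im : ℝ) : ℂ) * I) := by
      intro θ
      obtain ⟨m, rfl⟩ : ∃ m, n = m + 1 := ⟨n - 1, by omega⟩
      rw [hB _ (Complex.norm_exp_ofReal_mul_I θ), hL, ← Complex.exp_conj, hconj,
        Nat.add_sub_cancel, pow_succ]
      have h1 : exp (θ * I) ^ m ≠ 0 := pow_ne_zero _ (Complex.exp_ne_zero _)
      have h2 : exp (L θ) ≠ 0 := Complex.exp_ne_zero _
      rw [div_eq_iff h1, ← mul_div_assoc, div_eq_iff h2]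
      have h3 : exp (c * I) * (exp (θ * I) * exp (L θ - 2 * (L θ).im * I)) =
          exp (((θ + c + 2 * (-1) * (L θ).im : ℝ) : ℂ) * I) * exp (L θ) := by
        rw [← Complex.exp_add, ← Complex.exp_add, ← Complex.exp_add]
        congr 1
        push_cast
        ring
      linear_combination (exp (θ * I) ^ m) * h3
    refine ⟨n, hn, exp (c * I), z, Complex.norm_exp_ofReal_mul_I c, hz,
      ⟨_, hC, hd, fun θ => ?_, hlift⟩, key (fun ζ => (exp (c * I) * ∏ k, (ζ - z k) /
        (1 - conj (z k) * ζ)) / ζ ^ (n - 1)) _ hlift happ⟩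
    simp only [hLper]
    ring
  · obtain ⟨c, p, L, hp0, hp, hL, hC, hd, hLper, happ⟩ :=
      exists_poly_diffeo F hF hmono hper ε hε 1 (by norm_num)
    obtain ⟨n, z, hn, hz, hB⟩ := exists_blaschke_s11 p hp0 hp
    have hlift : ∀ θ : ℝ, exp (θ * I) ^ (n + 1) / (exp (((-c : ℝ) : ℂ) * I) *
        ∏ k, (exp (θ * I) - z k) / (1 - conj (z k) * exp (θ * I))) =
        exp (((θ + c + 2 * 1 * (L θ).im : ℝ) : ℂ) * I) := by
      intro θ
      rw [hB _ (Complex.norm_exp_ofReal_mul_I θ), hL, ← Complex.exp_conj, hconj, pow_succ]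
      have h1 : exp (θ * I) ^ n ≠ 0 := pow_ne_zero _ (Complex.exp_ne_zero _)
      have h2 : exp (L θ) ≠ 0 := Complex.exp_ne_zero _
      have h4 : exp (L θ - 2 * (L θ).im * I) ≠ 0 := Complex.exp_ne_zero _
      have h5 : exp (((-c : ℝ) : ℂ) * I) ≠ 0 := Complex.exp_ne_zero _
      rw [div_eq_iff (mul_ne_zero h5 (div_ne_zero (mul_ne_zero h1 h4) h2)), ← mul_div_assoc,
        ← mul_div_assoc, eq_div_iff h2]
      have h3 : exp (θ * I) * exp (L θ) = exp (((θ + c + 2 * 1 * (L θ).im : ℝ) : ℂ) * I) *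
          (exp (((-c : ℝ) : ℂ) * I) * exp (L θ - 2 * (L θ).im * I)) := by
        rw [← Complex.exp_add, ← Complex.exp_add, ← Complex.exp_add]
        congr 1
        push_cast
        ring
      linear_combination (exp (θ * I) ^ n) * h3
    refine ⟨n, exp (((-c : ℝ) : ℂ) * I), z, Complex.norm_exp_ofReal_mul_I (-c), hz,
      ⟨_, hC, hd, fun θ => ?_, hlift⟩, key (fun ζ => ζ ^ (n + 1) / (exp (((-c : ℝ) : ℂ) * I) *
        ∏ k, (ζ - z k) / (1 - conj (z k) * ζ))) _ hlift happ⟩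
    simp only [hLper]
    ring
end
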